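/- arXiv:2303.02628 — 2 statements merged into one kernel-verified Lean document; each statement's English description precedes it below -/
import Mathlib

section
/- Fix m ∈ ℕ and 1 ≤ k ≤ m. Let (F_n) be a sequence in the finitely generated Wiener chaos of degree m: F_n = P_n(N^{(n)}), N^{(n)} ~ γ_{K_n}, P_n in the degree-m Hermite span. For independent standard Gaussians (G_{j,i})_{1≤j≤k, 1≤i≤K_n} independent of N^{(n)}, set ♯^k[F_n] := Σ_{i_1,…,i_k=1}^{K_n} ∂_{i_1}⋯∂_{i_k} P_n(N^{(n)}) · G_{1,i_1} ⋯ G_{k,i_k}. If the laws of F_n converge weakly to N(0,1), then the laws of ♯^k[F_n] converge weakly to N(0, σ²) with σ² = m(m−1)⋯(m−k+1). -/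
open MeasureTheory ProbabilityTheory MvPolynomial Filter Topology
open scoped ENNReal NNReal

noncomputable def gaussPi (ι : Type) [Fintype ι] : Measure (ι → ℝ) :=
  Measure.pi fun _ => gaussianReal 0 1

noncomputable def hermiteProd {K : ℕ} (k : Fin K → ℕ) : MvPolynomial (Fin K) ℝ :=
  ∏ i, Polynomial.aeval (MvPolynomial.X i) (Polynomial.hermite (k i))

noncomputable def chaos (K m : ℕ) : Submodule ℝ (MvPolynomial (Fin K) ℝ) :=
  Submodule.span ℝ {P | ∃ k : Fin K → ℕ, ∑ i, k i = m ∧ P = hermiteProd k}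

noncomputable def sqField {ι : Type} [Fintype ι] (P : MvPolynomial ι ℝ) (x : ι → ℝ) : ℝ :=
  ∑ i, (eval x (pderiv i P)) ^ 2

def TendstoInLaw {E : Type} [MeasurableSpace E] [TopologicalSpace E]
    (μs : ℕ → Measure E) (μ : Measure E) : Prop :=
  ∀ f : BoundedContinuousFunction E ℝ,
    Tendsto (fun n => ∫ x, f x ∂μs n) atTop (𝓝 (∫ x, f x ∂μ))

/-- Iterated partial derivative of a multivariate polynomial along a tuple of directions. -/
noncomputable def pderivMulti {K k : ℕ} (i : Fin k → Fin K) (P : MvPolynomial (Fin K) ℝ) :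
    MvPolynomial (Fin K) ℝ :=
  (List.ofFn i).foldr (fun idx Q => pderiv idx Q) P

/-- The `k`-times iterated sharp operator `♯^k[F]`, viewed as a polynomial in the original Gaussian
coordinates (`Sum.inl`) and the fresh independent Gaussian coordinates `G_{j,i}` (`Sum.inr`). -/
noncomputable def sharpPoly {K : ℕ} (k : ℕ) (P : MvPolynomial (Fin K) ℝ) :
    MvPolynomial (Fin K ⊕ Fin k × Fin K) ℝ :=
  ∑ i : Fin k → Fin K,
    rename Sum.inl (pderivMulti i P) * ∏ j, MvPolynomial.X (Sum.inr (j, i j))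

/-!
Let `L` be the Ornstein–Uhlenbeck operator and `Γ` its carré du champ. The chaos of degree `m` is
contained in the eigenspace of `L` for `-m`, and there the spectral decomposition of `L` gives the
quantitative fourth moment bound `E[(Γ(P, P) - mσ)²] ≤ m² (E[P⁴] / 3 - 2σ E[P²] + σ²)`, whose right
side vanishes for `σ = E[P²]` and `E[P⁴] = 3 E[P²]²`. By hypercontractivity, convergence in law to
a Gaussian forces convergence of the second and fourth moments, so `Γ(F_n, F_n)` concentrates.

Given `N` and the first `k` fresh Gaussian vectors, `♯^{k+1}[F]` is a centered Gaussian with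
variance `V_k = ∑ i, (∂ᵢ ♯^k[F])²`, where `V_0 = Γ(F, F)`. Hence it suffices that `V_k` concentrates
at `m(m-1)⋯(m-k)`. Since `♯^{k+1}[F]` again satisfies `L = -m`, and its second and fourth moments
are `E[V_k]` and `3 E[V_k²]`, the same bound applied to `♯^{k+1}[F]` shows that
`Γ(♯^{k+1}[F], ♯^{k+1}[F])` concentrates at `m` times the limit of `V_k`. This quantity is `V_{k+1}`
plus `k + 1` copies of `V_k`, one for each fresh vector, which gives the factor `m - (k + 1)`.
-/

section GaussianMoments

variable (v : ℝ≥0) (n : ℕ)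

lemma integrable_pow_gaussianReal : Integrable (fun x : ℝ => x ^ n) (gaussianReal 0 v) := by
  rcases n.eq_zero_or_pos with rfl | hn
  · simp
  · refine ((memLp_id_gaussianReal (μ := 0) (v := v) (n : ℝ≥0)).integrable_norm_pow
      (by omega)).mono' (by fun_prop) (ae_of_all _ fun x => ?_)
    simp

lemma hasDerivAt_gaussianPDFReal (x : ℝ) :
    HasDerivAt (gaussianPDFReal 0 v) (-x / v * gaussianPDFReal 0 v x) x := by
  have hexponent : HasDerivAt (fun y : ℝ => -(y - 0) ^ 2 / (2 * v)) (-x / v) x := by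
    refine ((((hasDerivAt_id x).sub_const 0).pow 2).neg.div_const (2 * (v : ℝ))).congr_deriv ?_
    simp only [id_eq, sub_zero]
    push_cast
    rw [pow_one, mul_one, ← mul_neg, mul_div_mul_left _ _ two_ne_zero]
  rw [gaussianPDFReal_def]
  exact (hexponent.exp.const_mul (√(2 * Real.pi * v))⁻¹).congr_deriv (by ring)

variable {v}

lemma integrable_pow_mul_gaussianPDFReal (hv : v ≠ 0) :
    Integrable fun x : ℝ => x ^ n * gaussianPDFReal 0 v x := by
  have h := integrable_pow_gaussianReal v n
  rw [gaussianReal_of_var_ne_zero _ hv,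
    integrable_withDensity_iff_integrable_smul' (measurable_gaussianPDF 0 v)
      (ae_of_all _ fun _ => gaussianPDF_lt_top)] at h
  simpa only [toReal_gaussianPDF, smul_eq_mul, mul_comm] using h

variable (v)

lemma integral_pow_succ_gaussianReal :
    ∫ x, x ^ (n + 1) ∂gaussianReal 0 v = v * n * ∫ x, x ^ (n - 1) ∂gaussianReal 0 v := by
  rcases eq_or_ne v 0 with rfl | hv
  · simp
  have hv' : (v : ℝ) ≠ 0 := mod_cast hv
  have hparts := integral_mul_deriv_eq_deriv_mul_of_integrable
    (fun x _ => hasDerivAt_pow n x) (fun x _ => hasDerivAt_gaussianPDFReal v x)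
    (((integrable_pow_mul_gaussianPDFReal (n + 1) hv).const_mul (-(v : ℝ)⁻¹)).congr
      (ae_of_all _ fun x => show _ = x ^ n * (-x / v * gaussianPDFReal 0 v x) by ring))
    (((integrable_pow_mul_gaussianPDFReal (n - 1) hv).const_mul (n : ℝ)).congr
      (ae_of_all _ fun x => show _ = n * x ^ (n - 1) * gaussianPDFReal 0 v x by ring))
    (integrable_pow_mul_gaussianPDFReal n hv)
  simp only [integral_gaussianReal_eq_integral_smul hv, smul_eq_mul]
  calc ∫ x, gaussianPDFReal 0 v x * x ^ (n + 1)
      = ∫ x, -v * (x ^ n * (-x / v * gaussianPDFReal 0 v x)) := by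
        congr 1 with x
        field_simp
        ring
    _ = v * ∫ x, n * x ^ (n - 1) * gaussianPDFReal 0 v x := by
        rw [integral_const_mul, hparts, neg_mul_neg]
    _ = v * n * ∫ x, gaussianPDFReal 0 v x * x ^ (n - 1) := by
        simp only [mul_assoc, integral_const_mul, mul_comm (gaussianPDFReal 0 v _)]

lemma integral_sq_gaussianReal : ∫ x, x ^ 2 ∂gaussianReal 0 v = v := by
  simpa using integral_pow_succ_gaussianReal v 1

lemma integral_pow_four_gaussianReal : ∫ x, x ^ 4 ∂gaussianReal 0 v = 3 * (v : ℝ) ^ 2 := by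
  have h := integral_pow_succ_gaussianReal v 3
  simp only [Nat.reduceAdd, Nat.reduceSub, integral_sq_gaussianReal] at h
  rw [h]
  push_cast
  ring

end GaussianMoments

section Expectation

variable {ι κ : Type} [Fintype ι] [Fintype κ]

instance : IsProbabilityMeasure (gaussPi ι) := by
  unfold gaussPi
  infer_instance

lemma eval_monomial_eq_prod (s : ι →₀ ℕ) (a : ℝ) (x : ι → ℝ) :
    eval x (monomial s a) = a * ∏ i, x i ^ s i := by
  rw [eval_monomial, Finsupp.prod_fintype _ _ fun i => pow_zero _]

lemma integrable_eval_gaussPi (P : MvPolynomial ι ℝ) :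
    Integrable (fun x => eval x P) (gaussPi ι) := by
  induction P using MvPolynomial.induction_on' with
  | monomial s a =>
    simp only [eval_monomial_eq_prod]
    exact (Integrable.fintype_prod (f := fun i (x : ℝ) => x ^ s i)
      fun i => integrable_pow_gaussianReal 1 (s i)).const_mul a
  | add P Q hP hQ =>
    simp only [map_add]
    exact hP.add hQ

/-- The expectation `E[P(N)]` of a polynomial in independent standard Gaussians. -/
noncomputable def gaussExpect : MvPolynomial ι ℝ →ₗ[ℝ] ℝ where
  toFun P := ∫ x, eval x P ∂gaussPi ι
  map_add' P Q := by
    simp only [map_add]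
    exact integral_add (integrable_eval_gaussPi P) (integrable_eval_gaussPi Q)
  map_smul' c P := by
    simp only [smul_eval, RingHom.id_apply, smul_eq_mul]
    exact integral_const_mul _ _

lemma gaussExpect_apply (P : MvPolynomial ι ℝ) : gaussExpect P = ∫ x, eval x P ∂gaussPi ι := rfl

lemma gaussExpect_monomial (s : ι →₀ ℕ) (a : ℝ) :
    gaussExpect (monomial s a) = a * ∏ i, ∫ x, x ^ s i ∂gaussianReal 0 1 := by
  simp only [gaussExpect_apply, eval_monomial_eq_prod]
  rw [integral_const_mul]
  exact congrArg _ (integral_fintype_prod_eq_prod fun i (x : ℝ) => x ^ s i)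

lemma gaussExpect_C (a : ℝ) : gaussExpect (C a : MvPolynomial ι ℝ) = a := by
  simp [gaussExpect_apply]

lemma gaussExpect_mono {P Q : MvPolynomial ι ℝ} (h : ∀ x, eval x P ≤ eval x Q) :
    gaussExpect P ≤ gaussExpect Q :=
  integral_mono (integrable_eval_gaussPi P) (integrable_eval_gaussPi Q) h

lemma gaussExpect_nonneg {P : MvPolynomial ι ℝ} (h : ∀ x, 0 ≤ eval x P) : 0 ≤ gaussExpect P :=
  integral_nonneg h

lemma gaussExpect_sub_C_sq (P : MvPolynomial ι ℝ) (a : ℝ) :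
    gaussExpect ((P - C a) ^ 2) = gaussExpect (P ^ 2) - 2 * a * gaussExpect P + a ^ 2 := by
  have hexpand : (P - C a) ^ 2 = P ^ 2 - (2 * a) • P + C (a ^ 2) := by
    rw [smul_eq_C_mul, map_mul, map_ofNat, map_pow]
    ring
  rw [hexpand, map_add, map_sub, map_smul, gaussExpect_C, smul_eq_mul]

lemma gaussExpect_X_mul (i : ι) (P : MvPolynomial ι ℝ) :
    gaussExpect (X i * P) = gaussExpect (pderiv i P) := by
  classical
  induction P using MvPolynomial.induction_on' with
  | monomial s a =>
    have hoff :
        ∏ j ∈ Finset.univ.erase i,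
            ∫ x, x ^ (Finsupp.single i 1 + s : ι →₀ ℕ) j ∂gaussianReal 0 1
          = ∏ j ∈ Finset.univ.erase i,
            ∫ x, x ^ (s - Finsupp.single i 1 : ι →₀ ℕ) j ∂gaussianReal 0 1 := by
      refine Finset.prod_congr rfl fun j hj => ?_
      simp [Finsupp.single_eq_of_ne (Finset.ne_of_mem_erase hj)]
    have hdiag : ∫ x, x ^ (Finsupp.single i 1 + s : ι →₀ ℕ) i ∂gaussianReal 0 1
        = s i * ∫ x, x ^ (s - Finsupp.single i 1 : ι →₀ ℕ) i ∂gaussianReal 0 1 := by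
      simpa [add_comm] using integral_pow_succ_gaussianReal 1 (s i)
    rw [pderiv_monomial, X, monomial_mul, gaussExpect_monomial, gaussExpect_monomial,
      ← Finset.mul_prod_erase _ _ (Finset.mem_univ i),
      ← Finset.mul_prod_erase _ _ (Finset.mem_univ i), hoff, hdiag]
    ring
  | add P Q hP hQ => simp only [mul_add, map_add, hP, hQ]

lemma measurePreserving_comp_gaussPi {e : κ → ι} (he : Function.Injective e) :
    MeasurePreserving (fun x : ι → ℝ => x ∘ e) (gaussPi ι) (gaussPi κ) := by
  have hindep : iIndepFun (fun (i : ι) (x : ι → ℝ) => x i) (gaussPi ι) :=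
    iIndepFun_pi fun _ => aemeasurable_id
  refine ⟨by fun_prop, ?_⟩
  have hprod := (iIndepFun_iff_map_fun_eq_pi_map
    fun j => (measurable_pi_apply (e j)).aemeasurable).mp (hindep.precomp he)
  refine hprod.trans ?_
  simp only [gaussPi, (measurePreserving_eval (fun _ : ι => gaussianReal 0 1) _).map_eq]

lemma gaussExpect_rename {e : κ → ι} (he : Function.Injective e) (P : MvPolynomial κ ℝ) :
    gaussExpect (rename e P) = gaussExpect P := by
  have hmp := measurePreserving_comp_gaussPi he
  rw [gaussExpect_apply, gaussExpect_apply, ← hmp.map_eq,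
    integral_map hmp.measurable.aemeasurable (continuous_eval P).aestronglyMeasurable]
  simp only [eval_rename]

end Expectation

section OrnsteinUhlenbeck

variable {ι κ : Type} [Fintype ι] [Fintype κ]

/-- The carré du champ operator `Γ(P, Q) = ⟨∇P, ∇Q⟩`, bundled as a derivation in `Q`. -/
noncomputable def carreDuChamp (P : MvPolynomial ι ℝ) :
    Derivation ℝ (MvPolynomial ι ℝ) (MvPolynomial ι ℝ) :=
  ∑ i, pderiv i P • pderiv i

lemma carreDuChamp_apply (P Q : MvPolynomial ι ℝ) :
    carreDuChamp P Q = ∑ i, pderiv i P * pderiv i Q := by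
  rw [carreDuChamp, ← Derivation.coeFnAddMonoidHom_apply, map_sum, Finset.sum_apply]
  rfl

lemma carreDuChamp_comm (P Q : MvPolynomial ι ℝ) : carreDuChamp P Q = carreDuChamp Q P := by
  simp only [carreDuChamp_apply, mul_comm]

lemma carreDuChamp_self (P : MvPolynomial ι ℝ) : carreDuChamp P P = ∑ i, pderiv i P ^ 2 := by
  simp only [carreDuChamp_apply, sq]

/-- The Ornstein–Uhlenbeck operator `L = Δ - x · ∇`, the generator for which `γ` is reversible. -/
noncomputable def ornsteinUhlenbeck : Module.End ℝ (MvPolynomial ι ℝ) :=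
  ∑ i, ((pderiv i).toLinearMap ∘ₗ (pderiv i).toLinearMap
    - LinearMap.mulLeft ℝ (X i) ∘ₗ (pderiv i).toLinearMap)

lemma ornsteinUhlenbeck_apply (P : MvPolynomial ι ℝ) :
    ornsteinUhlenbeck P = ∑ i, (pderiv i (pderiv i P) - X i * pderiv i P) := by
  simp [ornsteinUhlenbeck]

lemma gaussExpect_mul_ornsteinUhlenbeck (P Q : MvPolynomial ι ℝ) :
    gaussExpect (Q * ornsteinUhlenbeck P) = -gaussExpect (carreDuChamp Q P) := by
  simp only [ornsteinUhlenbeck_apply, carreDuChamp_apply, Finset.mul_sum, map_sum,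
    ← Finset.sum_neg_distrib]
  refine Finset.sum_congr rfl fun i _ => ?_
  have hparts := gaussExpect_X_mul i (Q * pderiv i P)
  rw [pderiv_mul, map_add] at hparts
  rw [mul_sub, map_sub, mul_left_comm]
  linarith

lemma gaussExpect_mul_ornsteinUhlenbeck_comm (P Q : MvPolynomial ι ℝ) :
    gaussExpect (Q * ornsteinUhlenbeck P) = gaussExpect (ornsteinUhlenbeck Q * P) := by
  rw [mul_comm _ P, gaussExpect_mul_ornsteinUhlenbeck, gaussExpect_mul_ornsteinUhlenbeck,
    carreDuChamp_comm]

lemma ornsteinUhlenbeck_mul (P Q : MvPolynomial ι ℝ) :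
    ornsteinUhlenbeck (P * Q)
      = P * ornsteinUhlenbeck Q + Q * ornsteinUhlenbeck P + 2 * carreDuChamp P Q := by
  simp only [ornsteinUhlenbeck_apply, carreDuChamp_apply, Finset.mul_sum,
    ← Finset.sum_add_distrib]
  refine Finset.sum_congr rfl fun i _ => ?_
  simp only [pderiv_mul, map_add]
  ring

lemma pderiv_pderiv_comm {σ R : Type*} [CommRing R] (i j : σ) (P : MvPolynomial σ R) :
    pderiv i (pderiv j P) = pderiv j (pderiv i P) := by
  classical
  have hbracket : ⁅pderiv (R := R) i, pderiv j⁆ = 0 := derivation_ext fun l => by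
    rw [Derivation.commutator_apply]
    simp [pderiv_X, Pi.single_apply, apply_ite]
  rw [← sub_eq_zero, ← Derivation.commutator_apply, hbracket, Derivation.zero_apply]

lemma ornsteinUhlenbeck_pderiv (i : ι) (P : MvPolynomial ι ℝ) :
    ornsteinUhlenbeck (pderiv i P) = pderiv i (ornsteinUhlenbeck P) + pderiv i P := by
  classical
  have hX : ∑ j, pderiv i (X j) * pderiv j P = pderiv i P := by
    simp [pderiv_X, Pi.single_apply]
  simp only [ornsteinUhlenbeck_apply, map_sum, map_sub, pderiv_mul, Finset.sum_sub_distrib,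
    Finset.sum_add_distrib, hX, pderiv_pderiv_comm i]
  ring

lemma pderiv_rename_of_notMem_range {σ τ R : Type*} [CommSemiring R] {e : σ → τ} {b : τ}
    (hb : b ∉ Set.range e) (P : MvPolynomial σ R) : pderiv b (rename e P) = 0 :=
  pderiv_eq_zero_of_notMem_vars fun h =>
    let ⟨i, _, hi⟩ := mem_vars_rename e P h
    hb ⟨i, hi⟩

lemma ornsteinUhlenbeck_rename {e : κ → ι} (he : Function.Injective e) (P : MvPolynomial κ ℝ) :
    ornsteinUhlenbeck (rename e P) = rename e (ornsteinUhlenbeck P) := by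
  simp only [ornsteinUhlenbeck_apply, map_sum]
  refine (Fintype.sum_of_injective e he _ _ (fun b hb => ?_) fun i => ?_).symm
  · simp [pderiv_rename_of_notMem_range hb]
  · simp [pderiv_rename he]

variable (ι) in
/-- The `m`-th Wiener chaos in polynomials, encoded spectrally as an eigenspace of `L`. -/
noncomputable def wienerChaos (m : ℕ) : Submodule ℝ (MvPolynomial ι ℝ) :=
  ornsteinUhlenbeck.eigenspace (-(m : ℝ))

lemma mem_wienerChaos {m : ℕ} {P : MvPolynomial ι ℝ} :
    P ∈ wienerChaos ι m ↔ ornsteinUhlenbeck P = -(m : ℝ) • P :=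
  Module.End.mem_eigenspace_iff

lemma C_mem_wienerChaos_zero (a : ℝ) : C a ∈ wienerChaos ι 0 := by
  simp [mem_wienerChaos, ornsteinUhlenbeck_apply]

lemma rename_mem_wienerChaos {e : κ → ι} (he : Function.Injective e) {m : ℕ}
    {P : MvPolynomial κ ℝ} (hP : P ∈ wienerChaos κ m) : rename e P ∈ wienerChaos ι m := by
  rw [mem_wienerChaos, ornsteinUhlenbeck_rename he, mem_wienerChaos.mp hP, map_smul]

lemma mul_mem_wienerChaos {a b : ℕ} {P Q : MvPolynomial ι ℝ} (hP : P ∈ wienerChaos ι a)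
    (hQ : Q ∈ wienerChaos ι b) (hPQ : carreDuChamp P Q = 0) : P * Q ∈ wienerChaos ι (a + b) := by
  rw [mem_wienerChaos] at *
  rw [ornsteinUhlenbeck_mul, hP, hQ, hPQ, mul_smul_comm, mul_smul_comm, mul_comm Q, ← add_smul,
    mul_zero, add_zero]
  push_cast
  rw [neg_add_rev]

lemma prod_mem_wienerChaos {β : Type*} (s : Finset β) {p : β → MvPolynomial ι ℝ} {k : β → ℕ}
    (hp : ∀ a ∈ s, p a ∈ wienerChaos ι (k a))
    (horth : (s : Set β).Pairwise fun a b => carreDuChamp (p a) (p b) = 0) :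
    ∏ a ∈ s, p a ∈ wienerChaos ι (∑ a ∈ s, k a) := by
  classical
  induction s using Finset.induction_on with
  | empty => simpa using C_mem_wienerChaos_zero (ι := ι) 1
  | insert a s ha ih =>
    rw [Finset.coe_insert, Set.pairwise_insert] at horth
    rw [Finset.prod_insert ha, Finset.sum_insert ha]
    refine mul_mem_wienerChaos (hp a (s.mem_insert_self a))
      (ih (fun b hb => hp b (Finset.mem_insert_of_mem hb)) horth.1) ?_
    refine Finset.prod_induction _ (carreDuChamp (p a) · = 0) (fun P Q hP hQ => ?_)
      (Derivation.map_one_eq_zero _) fun b hb => (horth.2 b hb (ne_of_mem_of_not_mem hb ha).symm).1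
    rw [Derivation.leibniz, hP, hQ, smul_zero, smul_zero, add_zero]

end OrnsteinUhlenbeck

section Hermite

lemma derivative_hermite_succ (n : ℕ) :
    Polynomial.derivative (Polynomial.hermite (n + 1)) = (n + 1) * Polynomial.hermite n := by
  induction n with
  | zero => simp
  | succ n ih =>
    rw [Polynomial.hermite_succ (n + 1), Polynomial.derivative_sub, Polynomial.derivative_mul, ih,
      Polynomial.derivative_X, Polynomial.derivative_mul, Polynomial.hermite_succ n]
    simp only [one_mul, Polynomial.derivative_add, Polynomial.derivative_natCast,
      Polynomial.derivative_one, add_zero, zero_mul, zero_add, Nat.cast_add, Nat.cast_one]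
    ring

lemma hermite_differential_equation (n : ℕ) :
    Polynomial.derivative (Polynomial.derivative (Polynomial.hermite n))
        - Polynomial.X * Polynomial.derivative (Polynomial.hermite n)
      = -((n : Polynomial ℤ) * Polynomial.hermite n) := by
  rcases n with _ | n
  · simp
  · rw [derivative_hermite_succ, Polynomial.derivative_mul, Polynomial.hermite_succ n]
    simp only [Polynomial.derivative_add, Polynomial.derivative_natCast, Polynomial.derivative_one,
      add_zero, zero_mul, zero_add, Nat.cast_add, Nat.cast_one]
    ring

lemma derivation_aeval_int {σ R : Type*} [CommRing R]
    (D : Derivation R (MvPolynomial σ R) (MvPolynomial σ R)) (p : Polynomial ℤ)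
    (Q : MvPolynomial σ R) :
    D (Polynomial.aeval Q p) = Polynomial.aeval Q (Polynomial.derivative p) * D Q :=
  (D.restrictScalars ℤ).map_aeval p Q

variable {ι : Type} [Fintype ι]

lemma carreDuChamp_aeval_X_of_ne {i j : ι} (hij : i ≠ j) (p q : Polynomial ℤ) :
    carreDuChamp (Polynomial.aeval (X i : MvPolynomial ι ℝ) p) (Polynomial.aeval (X j) q) = 0 := by
  rw [derivation_aeval_int, carreDuChamp_comm, derivation_aeval_int, carreDuChamp_apply,
    Finset.sum_eq_zero, mul_zero, mul_zero]
  intro l _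
  rcases eq_or_ne l j with rfl | hl
  · rw [pderiv_X_of_ne hij, mul_zero]
  · rw [pderiv_X_of_ne hl.symm, zero_mul]

lemma ornsteinUhlenbeck_aeval_X (i : ι) (p : Polynomial ℤ) :
    ornsteinUhlenbeck (Polynomial.aeval (X i : MvPolynomial ι ℝ) p)
      = Polynomial.aeval (X i) (Polynomial.derivative (Polynomial.derivative p)
          - Polynomial.X * Polynomial.derivative p) := by
  rw [ornsteinUhlenbeck_apply, Finset.sum_eq_single i]
  · simp [derivation_aeval_int]
  · intro j _ hj
    simp [derivation_aeval_int, pderiv_X_of_ne hj.symm]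
  · simp

lemma aeval_X_hermite_mem_wienerChaos (i : ι) (n : ℕ) :
    Polynomial.aeval (X i) (Polynomial.hermite n) ∈ wienerChaos ι n := by
  rw [mem_wienerChaos, ornsteinUhlenbeck_aeval_X, hermite_differential_equation]
  simp [smul_eq_C_mul]

lemma chaos_le_wienerChaos (K m : ℕ) : chaos K m ≤ wienerChaos (Fin K) m := by
  refine Submodule.span_le.mpr ?_
  rintro _ ⟨k, rfl, rfl⟩
  exact prod_mem_wienerChaos _ (fun i _ => aeval_X_hermite_mem_wienerChaos i (k i))
    fun i _ j _ hij => carreDuChamp_aeval_X_of_ne hij _ _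

end Hermite

section SpectralDecomposition

lemma totalDegree_pderiv_le {σ R : Type*} [CommSemiring R] (i : σ) (P : MvPolynomial σ R) :
    (pderiv i P).totalDegree ≤ P.totalDegree - 1 := by
  classical
  refine Finset.sup_le fun s hs => ?_
  have hcoeff : coeff (s + Finsupp.single i 1) P ≠ 0 := fun h => by
    simp [mem_support_iff, coeff_pderiv, h] at hs
  have hdeg := le_totalDegree (mem_support_iff.mpr hcoeff)
  rw [Finsupp.sum_add_index' (fun _ => rfl) (fun _ _ _ => rfl), Finsupp.sum_single_index rfl]
    at hdeg
  omega

lemma coeff_X_mul_pderiv {σ R : Type*} [CommSemiring R] (i : σ) (P : MvPolynomial σ R)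
    (s : σ →₀ ℕ) : coeff s (X i * pderiv i P) = s i * coeff s P := by
  classical
  induction P using MvPolynomial.induction_on' with
  | monomial t a =>
    rw [X_mul_pderiv_monomial, coeff_smul, coeff_monomial]
    split_ifs with h <;> simp [h]
  | add P Q hP hQ => simp only [map_add, mul_add, coeff_add, hP, hQ]

variable {ι : Type} [Fintype ι]

lemma totalDegree_ornsteinUhlenbeck_add_le {d : ℕ} {P : MvPolynomial ι ℝ}
    (hP : P.totalDegree ≤ d + 1) :
    (ornsteinUhlenbeck P + ((d : ℝ) + 1) • P).totalDegree ≤ d := by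
  have hsplit : ornsteinUhlenbeck P + ((d : ℝ) + 1) • P
      = ∑ i, pderiv i (pderiv i P) + (((d : ℝ) + 1) • P - ∑ i, X i * pderiv i P) := by
    rw [ornsteinUhlenbeck_apply, Finset.sum_sub_distrib]
    ring
  rw [hsplit]
  refine (totalDegree_add _ _).trans (max_le ?_ (Finset.sup_le fun s hs => ?_))
  · refine totalDegree_finsetSum_le fun i _ => ?_
    have h₁ := totalDegree_pderiv_le i (pderiv i P)
    have h₂ := totalDegree_pderiv_le i P
    omega
  · have hcoeff : coeff s (((d : ℝ) + 1) • P - ∑ i, X i * pderiv i P)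
        = ((d : ℝ) + 1 - s.sum fun _ e => e) * coeff s P := by
      rw [Finsupp.sum_fintype _ _ fun _ => rfl]
      simp only [coeff_sub, coeff_smul, coeff_sum, coeff_X_mul_pderiv, smul_eq_mul,
        ← Finset.sum_mul, ← sub_mul, Nat.cast_sum]
    rw [mem_support_iff, hcoeff, mul_ne_zero_iff] at hs
    have hle := (le_totalDegree (mem_support_iff.mpr hs.2)).trans hP
    have hne : d + 1 ≠ s.sum fun _ e => e := fun h => hs.1 (by rw [← h]; simp)
    omega

lemma totalDegree_le_of_mem_wienerChaos {m : ℕ} {P : MvPolynomial ι ℝ}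
    (hP : P ∈ wienerChaos ι m) : P.totalDegree ≤ m := by
  by_contra! hlt
  obtain ⟨d, hd⟩ := Nat.exists_eq_succ_of_ne_zero (Nat.ne_zero_of_lt hlt)
  have hne : -(m : ℝ) + (d + 1) ≠ 0 := by
    have : (m : ℝ) < d + 1 := by exact_mod_cast hlt.trans_eq hd
    linarith
  have hdrop := totalDegree_ornsteinUhlenbeck_add_le hd.le
  rw [mem_wienerChaos.mp hP, ← add_smul] at hdrop
  have hle := (totalDegree_smul_le (-(m : ℝ) + (d + 1))⁻¹ _).trans hdrop
  rw [inv_smul_smul₀ hne] at hle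
  omega

lemma exists_chaosDecomposition {d : ℕ} {R : MvPolynomial ι ℝ} (hR : R.totalDegree ≤ d) :
    ∃ q : ℕ → MvPolynomial ι ℝ, (∀ j, q j ∈ wienerChaos ι j) ∧
      R = ∑ j ∈ Finset.range (d + 1), q j := by
  induction d generalizing R with
  | zero =>
    refine ⟨Pi.single 0 R, fun j => ?_, by simp⟩
    rcases eq_or_ne j 0 with rfl | hj
    · rw [Pi.single_eq_same, totalDegree_eq_zero_iff_eq_C.mp (Nat.le_zero.mp hR)]
      exact C_mem_wienerChaos_zero _
    · rw [Pi.single_eq_of_ne hj]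
      exact zero_mem _
  | succ d ih =>
    -- `L + (d + 1)` lowers the degree and is invertible on the chaoses of order at most `d`.
    obtain ⟨r, hr, hsum⟩ := ih (totalDegree_ornsteinUhlenbeck_add_le hR)
    set q : ℕ → MvPolynomial ι ℝ := fun j => ((d : ℝ) + 1 - j)⁻¹ • r j
    have hq (j) : q j ∈ wienerChaos ι j := Submodule.smul_mem _ _ (hr j)
    set T := ∑ j ∈ Finset.range (d + 1), q j
    have hT : ornsteinUhlenbeck T + ((d : ℝ) + 1) • T
        = ornsteinUhlenbeck R + ((d : ℝ) + 1) • R := by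
      rw [hsum, map_sum, Finset.smul_sum, ← Finset.sum_add_distrib]
      refine Finset.sum_congr rfl fun j hj => ?_
      have hj' : (j : ℝ) < d + 1 := mod_cast Finset.mem_range.mp hj
      rw [mem_wienerChaos.mp (hq j), ← add_smul, smul_smul, neg_add_eq_sub,
        mul_inv_cancel₀ (sub_pos.mpr hj').ne', one_smul]
    refine ⟨Function.update q (d + 1) (R - T), fun j => ?_, ?_⟩
    · rcases eq_or_ne j (d + 1) with rfl | hj
      · rw [Function.update_self, mem_wienerChaos, map_sub, Nat.cast_succ, neg_smul,
          ← sub_eq_zero, sub_neg_eq_add, smul_sub, sub_add_sub_comm, hT, sub_self]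
      · rw [Function.update_of_ne hj]
        exact hq j
    · rw [Finset.sum_range_succ, Function.update_self, Finset.sum_congr rfl fun j hj =>
        Function.update_of_ne (Finset.mem_range.mp hj).ne (R - T) q]
      exact (add_sub_cancel T R).symm

lemma gaussExpect_mul_eq_zero_of_mem_wienerChaos {a b : ℕ} (hab : a ≠ b)
    {P Q : MvPolynomial ι ℝ} (hP : P ∈ wienerChaos ι a) (hQ : Q ∈ wienerChaos ι b) :
    gaussExpect (P * Q) = 0 := by
  have h := gaussExpect_mul_ornsteinUhlenbeck_comm Q P
  rw [mem_wienerChaos.mp hP, mem_wienerChaos.mp hQ, mul_smul_comm, smul_mul_assoc, map_smul,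
    map_smul, neg_smul, neg_smul, neg_inj, smul_eq_mul, smul_eq_mul] at h
  by_contra hne
  exact hab (mod_cast (mul_right_cancel₀ hne h).symm)

lemma pow_ornsteinUhlenbeck_of_mem_wienerChaos {m : ℕ} {P : MvPolynomial ι ℝ}
    (hP : P ∈ wienerChaos ι m) (r : ℕ) :
    (ornsteinUhlenbeck ^ r) P = (-(m : ℝ)) ^ r • P := by
  induction r with
  | zero => simp
  | succ r ih =>
    rw [pow_succ', Module.End.mul_apply, ih, map_smul, mem_wienerChaos.mp hP, smul_smul, pow_succ]

lemma gaussExpect_sum_mul_pow_ornsteinUhlenbeck {q : ℕ → MvPolynomial ι ℝ}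
    (hq : ∀ j, q j ∈ wienerChaos ι j) (s : Finset ℕ) (r : ℕ) :
    gaussExpect ((∑ j ∈ s, q j) * (ornsteinUhlenbeck ^ r) (∑ j ∈ s, q j))
      = ∑ j ∈ s, (-(j : ℝ)) ^ r * gaussExpect (q j ^ 2) := by
  simp only [map_sum, pow_ornsteinUhlenbeck_of_mem_wienerChaos (hq _), Finset.sum_mul,
    Finset.mul_sum, mul_smul_comm, map_smul, smul_eq_mul]
  refine Finset.sum_congr rfl fun i hi => ?_
  rw [Finset.sum_eq_single_of_mem i hi fun j _ hj => ?_, sq]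
  rw [gaussExpect_mul_eq_zero_of_mem_wienerChaos hj (hq j) (hq i), mul_zero]

lemma exists_spectralMeasure {d : ℕ} {R : MvPolynomial ι ℝ} (hR : R.totalDegree ≤ d) :
    ∃ w : ℕ → ℝ, (∀ j, 0 ≤ w j) ∧ gaussExpect R ^ 2 = w 0 ∧
      gaussExpect (R ^ 2) = ∑ j ∈ Finset.range (d + 1), w j ∧
      gaussExpect (carreDuChamp R R) = ∑ j ∈ Finset.range (d + 1), j * w j ∧
      gaussExpect (ornsteinUhlenbeck R ^ 2) = ∑ j ∈ Finset.range (d + 1), (j : ℝ) ^ 2 * w j := by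
  obtain ⟨q, hq, hRq⟩ := exists_chaosDecomposition hR
  have hspec := gaussExpect_sum_mul_pow_ornsteinUhlenbeck hq (Finset.range (d + 1))
  rw [← hRq] at hspec
  refine ⟨fun j => gaussExpect (q j ^ 2), fun j => gaussExpect_nonneg fun x => ?_, ?_, ?_, ?_, ?_⟩
  · rw [map_pow]
    positivity
  · have hmean : gaussExpect R = gaussExpect (q 0) := by
      rw [hRq, map_sum, Finset.sum_eq_single_of_mem 0 (by simp) fun j _ hj => ?_]
      simpa using
        gaussExpect_mul_eq_zero_of_mem_wienerChaos hj (hq j) (C_mem_wienerChaos_zero 1)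
    have hconst := totalDegree_eq_zero_iff_eq_C.mp
      (Nat.le_zero.mp (totalDegree_le_of_mem_wienerChaos (hq 0)))
    dsimp only
    rw [hmean, hconst, ← C_pow, gaussExpect_C, gaussExpect_C]
  · simpa [sq] using hspec 0
  · simpa [gaussExpect_mul_ornsteinUhlenbeck] using hspec 1
  · simpa [pow_two ornsteinUhlenbeck, gaussExpect_mul_ornsteinUhlenbeck_comm,
      sq (ornsteinUhlenbeck R)] using hspec 2

lemma gaussian_poincare_inequality (R : MvPolynomial ι ℝ) :
    gaussExpect (R ^ 2) ≤ gaussExpect R ^ 2 + gaussExpect (carreDuChamp R R) := by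
  obtain ⟨w, hw, hmean, hsq, hΓ, -⟩ := exists_spectralMeasure le_rfl (R := R)
  rw [hmean, hsq, hΓ, Finset.sum_range_succ', Finset.sum_range_succ', Nat.cast_zero, zero_mul,
    add_zero, add_comm]
  gcongr with j
  exact le_mul_of_one_le_left (hw _) (by simp)

lemma gaussExpect_carreDuChamp_le {d : ℕ} {R : MvPolynomial ι ℝ} (hR : R.totalDegree ≤ d) :
    gaussExpect (carreDuChamp R R) ≤ d * gaussExpect (R ^ 2) := by
  obtain ⟨w, hw, -, hsq, hΓ, -⟩ := exists_spectralMeasure hR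
  rw [hsq, hΓ, Finset.mul_sum]
  gcongr with j hj
  · exact hw j
  · exact Finset.mem_range_succ_iff.mp hj

lemma gaussExpect_ornsteinUhlenbeck_sq_le {d : ℕ} {R : MvPolynomial ι ℝ}
    (hR : R.totalDegree ≤ d) :
    gaussExpect (ornsteinUhlenbeck R ^ 2) ≤ d * gaussExpect (carreDuChamp R R) := by
  obtain ⟨w, hw, -, -, hΓ, hL⟩ := exists_spectralMeasure hR
  rw [hΓ, hL, Finset.mul_sum]
  refine Finset.sum_le_sum fun j hj => ?_
  rw [sq, mul_assoc]
  gcongr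
  · exact mul_nonneg j.cast_nonneg (hw j)
  · exact Finset.mem_range_succ_iff.mp hj

end SpectralDecomposition

section FourthMoment

variable {ι : Type} [Fintype ι] {m : ℕ} {P : MvPolynomial ι ℝ}

lemma gaussExpect_carreDuChamp_of_mem_wienerChaos (hP : P ∈ wienerChaos ι m) :
    gaussExpect (carreDuChamp P P) = m * gaussExpect (P ^ 2) := by
  have h := gaussExpect_mul_ornsteinUhlenbeck P P
  rw [mem_wienerChaos.mp hP, mul_smul_comm, map_smul, neg_smul, neg_inj] at h
  rw [← h, smul_eq_mul, sq]

lemma gaussExpect_sq_mul_carreDuChamp_of_mem_wienerChaos (hP : P ∈ wienerChaos ι m) :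
    3 * gaussExpect (P ^ 2 * carreDuChamp P P) = m * gaussExpect (P ^ 4) := by
  have h := gaussExpect_mul_ornsteinUhlenbeck P (P ^ 3)
  rw [mem_wienerChaos.mp hP, mul_smul_comm, map_smul, neg_smul, neg_inj, carreDuChamp_comm,
    Derivation.leibniz_pow, map_nsmul, ← pow_succ] at h
  simpa using h.symm

lemma gaussExpect_carreDuChamp_sq_le_of_mem_wienerChaos (hP : P ∈ wienerChaos ι m) :
    gaussExpect (carreDuChamp P P ^ 2) ≤ m * gaussExpect (P ^ 2 * carreDuChamp P P) := by
  set Γ := carreDuChamp P P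
  have hL : ornsteinUhlenbeck (P ^ 2) = (2 : ℝ) • (Γ - (m : ℝ) • P ^ 2) := by
    rw [sq, ornsteinUhlenbeck_mul, mem_wienerChaos.mp hP]
    simp only [smul_eq_C_mul, map_neg, map_ofNat]
    ring
  have hdeg : (P ^ 2).totalDegree ≤ 2 * m :=
    (totalDegree_pow _ _).trans (Nat.mul_le_mul_left 2 (totalDegree_le_of_mem_wienerChaos hP))
  -- The spectrum of `-L` on `P ^ 2` lies in `[0, 2m]`, so `L (L + 2m) ≤ 0` there.
  have hspec := gaussExpect_ornsteinUhlenbeck_sq_le hdeg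
  rw [← neg_eq_iff_eq_neg.mpr (gaussExpect_mul_ornsteinUhlenbeck (P ^ 2) (P ^ 2)), hL] at hspec
  have hexpand : ((2 : ℝ) • (Γ - (m : ℝ) • P ^ 2)) ^ 2
      = (4 : ℝ) • Γ ^ 2 - (4 * m : ℝ) • (P ^ 2 * Γ)
        - (2 * m : ℝ) • (P ^ 2 * ((2 : ℝ) • (Γ - (m : ℝ) • P ^ 2))) := by
    simp only [smul_eq_C_mul, map_mul, map_ofNat]
    ring
  rw [hexpand, map_sub, map_sub, map_smul, map_smul, map_smul] at hspec
  simp only [smul_eq_mul, Nat.cast_mul, Nat.cast_ofNat] at hspec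
  linarith

lemma gaussExpect_carreDuChamp_sub_C_sq_le (hP : P ∈ wienerChaos ι m) (σ : ℝ) :
    gaussExpect ((carreDuChamp P P - C (m * σ)) ^ 2)
      ≤ m ^ 2 * (gaussExpect (P ^ 4) / 3 - 2 * σ * gaussExpect (P ^ 2) + σ ^ 2) := by
  have hsq := gaussExpect_carreDuChamp_sq_le_of_mem_wienerChaos hP
  have hP4 := gaussExpect_sq_mul_carreDuChamp_of_mem_wienerChaos hP
  calc gaussExpect ((carreDuChamp P P - C (m * σ)) ^ 2)
      = gaussExpect (carreDuChamp P P ^ 2) - 2 * (m * σ) * (m * gaussExpect (P ^ 2))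
        + (m * σ) ^ 2 := by
        rw [gaussExpect_sub_C_sq, gaussExpect_carreDuChamp_of_mem_wienerChaos hP]
    _ ≤ m * (m * gaussExpect (P ^ 4) / 3) - 2 * (m * σ) * (m * gaussExpect (P ^ 2))
        + (m * σ) ^ 2 := by
        rw [← hP4, mul_div_cancel_left₀ _ three_ne_zero]
        gcongr
    _ = _ := by ring

end FourthMoment

section Hypercontractivity

variable {ι η : Type} [Fintype ι] [Fintype η]

lemma eval_carreDuChamp_sum_sq_le (Q : η → MvPolynomial ι ℝ) (x : ι → ℝ) :
    eval x (carreDuChamp (∑ a, Q a ^ 2) (∑ a, Q a ^ 2))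
      ≤ 4 * (eval x (∑ a, Q a ^ 2) * eval x (∑ p : ι × η, pderiv p.1 (Q p.2) ^ 2)) := by
  have hpderiv (i : ι) : eval x (pderiv i (∑ a, Q a ^ 2))
      = 2 * ∑ a, eval x (Q a) * eval x (pderiv i (Q a)) := by
    simp only [map_sum, Derivation.leibniz_pow, Finset.mul_sum]
    simp
  calc eval x (carreDuChamp (∑ a, Q a ^ 2) (∑ a, Q a ^ 2))
      = ∑ i, 4 * (∑ a, eval x (Q a) * eval x (pderiv i (Q a))) ^ 2 := by
        rw [carreDuChamp_self, map_sum]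
        refine Finset.sum_congr rfl fun i _ => ?_
        rw [map_pow, hpderiv]
        ring
    _ ≤ ∑ i, 4 * ((∑ a, eval x (Q a) ^ 2) * ∑ a, eval x (pderiv i (Q a)) ^ 2) := by
        gcongr with i
        exact Finset.sum_mul_sq_le_sq_mul_sq _ _ _
    _ = _ := by
        simp only [map_sum, map_pow, Fintype.sum_prod_type, Finset.mul_sum]

/-- The constant by which the fourth moment of a Gaussian polynomial of degree `d` is controlled by
the square of its second moment; the recursion is the one produced by the Poincaré inequality. -/
noncomputable def hypercontractiveConst : ℕ → ℝ
  | 0 => 1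
  | d + 1 => 2 + 16 * ((d : ℝ) + 1) ^ 2 * hypercontractiveConst d

lemma hypercontractiveConst_pos : ∀ d, 0 < hypercontractiveConst d
  | 0 => one_pos
  | d + 1 => by
    have := hypercontractiveConst_pos d
    rw [hypercontractiveConst]
    positivity

lemma gaussExpect_carreDuChamp_sum_sq_le (Q : η → MvPolynomial ι ℝ) :
    gaussExpect (carreDuChamp (∑ a, Q a ^ 2) (∑ a, Q a ^ 2))
      ≤ gaussExpect ((∑ a, Q a ^ 2) ^ 2) / 2
        + 8 * gaussExpect ((∑ p : ι × η, pderiv p.1 (Q p.2) ^ 2) ^ 2) := by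
  set f := ∑ a, Q a ^ 2
  set g := ∑ p : ι × η, pderiv p.1 (Q p.2) ^ 2
  calc gaussExpect (carreDuChamp f f)
      ≤ gaussExpect ((1 / 2 : ℝ) • f ^ 2 + (8 : ℝ) • g ^ 2) :=
        gaussExpect_mono fun x => (eval_carreDuChamp_sum_sq_le Q x).trans (by
          simp only [map_add, smul_eval, map_pow]
          linarith [sq_nonneg (eval x f - 4 * eval x g)])
    _ = gaussExpect (f ^ 2) / 2 + 8 * gaussExpect (g ^ 2) := by
        rw [map_add, map_smul, map_smul, smul_eq_mul, smul_eq_mul]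
        ring

lemma gaussExpect_sum_sq_sq_le {d : ℕ} {Q : η → MvPolynomial ι ℝ}
    (hQ : ∀ a, (Q a).totalDegree ≤ d) :
    gaussExpect ((∑ a, Q a ^ 2) ^ 2)
      ≤ hypercontractiveConst d * gaussExpect (∑ a, Q a ^ 2) ^ 2 := by
  induction d generalizing η with
  | zero =>
    have hconst (a : η) : Q a = C (coeff 0 (Q a)) :=
      totalDegree_eq_zero_iff_eq_C.mp (Nat.le_zero.mp (hQ a))
    have hsum : ∑ a, Q a ^ 2 = C (∑ a, coeff 0 (Q a) ^ 2) := by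
      simp only [map_sum, map_pow, ← hconst]
    rw [hsum, ← C_pow, gaussExpect_C, gaussExpect_C, hypercontractiveConst, one_mul]
  | succ d ih =>
    set f := ∑ a, Q a ^ 2
    set g := ∑ p : ι × η, pderiv p.1 (Q p.2) ^ 2 with hg
    have hgrad : gaussExpect (g ^ 2) ≤ hypercontractiveConst d * gaussExpect g ^ 2 :=
      ih fun p => (totalDegree_pderiv_le _ _).trans (Nat.sub_le_of_le_add (hQ p.2))
    have hg_nonneg : 0 ≤ gaussExpect g := gaussExpect_nonneg fun x => by
      simp only [hg, map_sum, map_pow]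
      positivity
    have hg_le : gaussExpect g ≤ (d + 1) * gaussExpect f := by
      simp only [hg, f, Fintype.sum_prod_type_right, ← carreDuChamp_self, map_sum, Finset.mul_sum]
      gcongr with a
      exact_mod_cast gaussExpect_carreDuChamp_le (hQ a)
    -- The Poincaré inequality for `f` absorbs half of `E[f ^ 2]` into the left-hand side.
    calc gaussExpect (f ^ 2)
        ≤ 2 * gaussExpect f ^ 2 + 16 * gaussExpect (g ^ 2) := by
          linarith [gaussian_poincare_inequality f, gaussExpect_carreDuChamp_sum_sq_le Q]
      _ ≤ 2 * gaussExpect f ^ 2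
          + 16 * (hypercontractiveConst d * ((d + 1) * gaussExpect f) ^ 2) := by
          have := (hypercontractiveConst_pos d).le
          gcongr
          exact hgrad.trans (by gcongr)
      _ = hypercontractiveConst (d + 1) * gaussExpect f ^ 2 := by
          rw [hypercontractiveConst]
          ring

lemma gaussExpect_pow_four_le {d : ℕ} {Q : MvPolynomial ι ℝ} (hQ : Q.totalDegree ≤ d) :
    gaussExpect (Q ^ 4) ≤ hypercontractiveConst d * gaussExpect (Q ^ 2) ^ 2 := by
  simpa [← pow_mul] using gaussExpect_sum_sq_sq_le (Q := fun _ : Unit => Q) fun _ => hQ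

end Hypercontractivity

section MomentConvergence

lemma abs_sub_clamp_le_sq_div {T : ℝ} (hT : 0 < T) (y : ℝ) :
    |y - max (-T) (min y T)| ≤ y ^ 2 / T := by
  rw [le_div_iff₀ hT]
  rcases le_total y T with h | h
  · rcases le_total (-T) y with h' | h'
    · rw [min_eq_left h, max_eq_right h', sub_self, abs_zero, zero_mul]
      positivity
    · rw [min_eq_left h, max_eq_left h', abs_of_nonpos (by linarith)]
      nlinarith
  · rw [min_eq_right h, max_eq_right (by linarith), abs_of_nonneg (by linarith)]
    nlinarith

lemma le_add_mul_min_add_sq_div {M S y : ℝ} (hM : 0 < M) (hS : 0 < S) (hy : 0 ≤ y) :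
    y ≤ M + S * min (y / M) 1 + y ^ 2 / S := by
  rcases le_total y M with h | h
  · have : 0 ≤ S * min (y / M) 1 + y ^ 2 / S := by positivity
    linarith
  · rw [min_eq_right ((one_le_div hM).mpr h)]
    rcases le_total y S with h' | h'
    · have : 0 ≤ y ^ 2 / S := by positivity
      linarith
    · have : y ≤ y ^ 2 / S := by
        rw [le_div_iff₀ hS, sq]
        gcongr
      linarith

variable {E : Type} [MeasurableSpace E]

lemma abs_integral_sub_integral_clamp_le {ν : Measure E} [IsProbabilityMeasure ν] {f : E → ℝ}
    (hf : MemLp f 2 ν) {T : ℝ} (hT : 0 < T) :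
    |∫ x, f x ∂ν - ∫ x, max (-T) (min (f x) T) ∂ν| ≤ (∫ x, f x ^ 2 ∂ν) / T := by
  have hint : Integrable f ν := hf.integrable one_le_two
  have hclamp : Integrable (fun x => max (-T) (min (f x) T)) ν :=
    (integrable_const (-T)).sup (hint.inf (integrable_const T))
  rw [← integral_sub hint hclamp, ← integral_div]
  exact (abs_integral_le_integral_abs).trans (integral_mono (hint.sub hclamp).abs
    (hf.integrable_sq.div_const T) fun x => abs_sub_clamp_le_sq_div hT (f x))

lemma integral_le_of_reverse_holder {ν : Measure E} [IsProbabilityMeasure ν] {f : E → ℝ}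
    (hf : MemLp f 2 ν) (hnonneg : ∀ x, 0 ≤ f x) {c M : ℝ} (hc : 0 < c) (hM : 0 < M)
    (hrev : ∫ x, f x ^ 2 ∂ν ≤ c * (∫ x, f x ∂ν) ^ 2)
    (hsmall : ∫ x, min (f x / M) 1 ∂ν ≤ 1 / (8 * c)) :
    ∫ x, f x ∂ν ≤ 4 * M := by
  have hint : Integrable f ν := hf.integrable one_le_two
  have hmin : Integrable (fun x => min (f x / M) 1) ν :=
    (hint.div_const M).inf (integrable_const 1)
  set V := ∫ x, f x ∂ν
  have hV_nonneg : 0 ≤ V := integral_nonneg hnonneg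
  rcases hV_nonneg.eq_or_lt with hV | hV
  · rw [← hV]
    positivity
  have hS : 0 < 2 * c * V := by positivity
  have hV_le : V ≤ M + 2 * c * V * ∫ x, min (f x / M) 1 ∂ν + (∫ x, f x ^ 2 ∂ν) / (2 * c * V) := by
    calc V ≤ ∫ x, (M + 2 * c * V * min (f x / M) 1 + f x ^ 2 / (2 * c * V)) ∂ν :=
          integral_mono hint (((integrable_const M).add (hmin.const_mul _)).add
            (hf.integrable_sq.div_const _)) fun x => le_add_mul_min_add_sq_div hM hS (hnonneg x)
      _ = _ := by
          rw [integral_add _ (hf.integrable_sq.div_const _),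
            integral_add (integrable_const M) (hmin.const_mul _), integral_const_mul, integral_div,
            integral_const, probReal_univ, one_smul]
          exact (integrable_const M).add (hmin.const_mul _)
  have hmiddle : 2 * c * V * ∫ x, min (f x / M) 1 ∂ν ≤ V / 4 := by
    calc _ ≤ 2 * c * V * (1 / (8 * c)) := by gcongr
      _ = V / 4 := by field_simp; norm_num
  have hlast : (∫ x, f x ^ 2 ∂ν) / (2 * c * V) ≤ V / 2 := by
    calc _ ≤ c * V ^ 2 / (2 * c * V) := by gcongr
      _ = V / 2 := by field_simp
  linarith

namespace TendstoInLaw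

variable [TopologicalSpace E] {μs : ℕ → Measure E} {μ : Measure E} {f : E → ℝ}

lemma tendsto_integral_of_forall_abs_le (h : TendstoInLaw μs μ) (hf : Continuous f) {C : ℝ}
    (hC : ∀ x, |f x| ≤ C) : Tendsto (fun n => ∫ x, f x ∂μs n) atTop (𝓝 (∫ x, f x ∂μ)) :=
  h (BoundedContinuousFunction.ofNormedAddCommGroup f hf C hC)

variable [∀ n, IsProbabilityMeasure (μs n)] [IsProbabilityMeasure μ]

lemma tendsto_integral_of_integral_sq_le (h : TendstoInLaw μs μ) (hcont : Continuous f)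
    (hfs : ∀ n, MemLp f 2 (μs n)) (hf : MemLp f 2 μ) {B : ℝ}
    (hB : ∀ᶠ n in atTop, ∫ x, f x ^ 2 ∂μs n ≤ B) :
    Tendsto (fun n => ∫ x, f x ∂μs n) atTop (𝓝 (∫ x, f x ∂μ)) := by
  refine Metric.tendsto_nhds.mpr fun ε hε => ?_
  set B' := max B (∫ x, f x ^ 2 ∂μ)
  have hB'_nonneg : 0 ≤ B' := le_max_of_le_right (integral_nonneg fun x => sq_nonneg (f x))
  set T := 3 * (B' + 1) / ε
  have hT : 0 < T := by positivity
  have htail : B' / T < ε / 3 := by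
    rw [div_lt_iff₀ hT, show ε / 3 * T = B' + 1 by simp only [T]; field_simp]
    exact lt_add_one B'
  have hclamp (x : E) : |max (-T) (min (f x) T)| ≤ T :=
    abs_le.mpr ⟨le_max_left _ _, max_le (by linarith) (min_le_right _ _)⟩
  have hlim := Metric.tendsto_nhds.mp
    (h.tendsto_integral_of_forall_abs_le (by fun_prop) hclamp) (ε / 3) (by positivity)
  have hμ : (∫ x, f x ^ 2 ∂μ) / T ≤ B' / T := by gcongr; exact le_max_right _ _
  filter_upwards [hlim, hB] with n hn hBn
  have hμs : (∫ x, f x ^ 2 ∂μs n) / T ≤ B' / T := by gcongr; exact hBn.trans (le_max_left _ _)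
  have h₁ := abs_le.mp (abs_integral_sub_integral_clamp_le (hfs n) hT)
  have h₂ := abs_le.mp (abs_integral_sub_integral_clamp_le hf hT)
  rw [Real.dist_eq, abs_lt] at hn ⊢
  constructor <;> linarith

lemma eventually_integral_le_of_reverse_holder (h : TendstoInLaw μs μ) (hcont : Continuous f)
    (hnonneg : ∀ x, 0 ≤ f x) (hfs : ∀ n, MemLp f 2 (μs n)) (hf : Integrable f μ) {c : ℝ}
    (hc : 0 < c) (hrev : ∀ n, ∫ x, f x ^ 2 ∂μs n ≤ c * (∫ x, f x ∂μs n) ^ 2) :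
    ∃ B, ∀ᶠ n in atTop, ∫ x, f x ∂μs n ≤ B := by
  have hA : 0 ≤ ∫ x, f x ∂μ := integral_nonneg hnonneg
  set M := 8 * c * ∫ x, f x ∂μ + 1 with hM_def
  have hM : 0 < M := by positivity
  have hmin (x : E) : |min (f x / M) 1| ≤ 1 := by
    have := hnonneg x
    rw [abs_of_nonneg (by positivity)]
    exact min_le_right _ _
  have hsmall : ∫ x, min (f x / M) 1 ∂μ < 1 / (8 * c) := by
    calc ∫ x, min (f x / M) 1 ∂μ ≤ ∫ x, f x / M ∂μ :=
          integral_mono ((hf.div_const M).inf (integrable_const 1)) (hf.div_const M)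
            fun x => min_le_left _ _
      _ = (∫ x, f x ∂μ) / M := integral_div _ _
      _ < 1 / (8 * c) := by
          rw [div_lt_div_iff₀ hM (by positivity), hM_def]
          linarith
  refine ⟨4 * M, ?_⟩
  filter_upwards [(h.tendsto_integral_of_forall_abs_le (by fun_prop) hmin).eventually_lt_const
    hsmall] with n hn
  exact integral_le_of_reverse_holder (hfs n) hnonneg hc hM (hrev n) hn.le

lemma tendsto_integral_of_reverse_holder (h : TendstoInLaw μs μ) (hcont : Continuous f)
    (hnonneg : ∀ x, 0 ≤ f x) (hfs : ∀ n, MemLp f 2 (μs n)) (hf : MemLp f 2 μ) {c : ℝ}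
    (hc : 0 < c) (hrev : ∀ n, ∫ x, f x ^ 2 ∂μs n ≤ c * (∫ x, f x ∂μs n) ^ 2) :
    Tendsto (fun n => ∫ x, f x ∂μs n) atTop (𝓝 (∫ x, f x ∂μ)) := by
  obtain ⟨B, hB⟩ := h.eventually_integral_le_of_reverse_holder hcont hnonneg hfs
    (hf.integrable one_le_two) hc hrev
  refine h.tendsto_integral_of_integral_sq_le hcont hfs hf (B := c * B ^ 2) ?_
  filter_upwards [hB] with n hn
  have hpos : 0 ≤ ∫ x, f x ∂μs n := integral_nonneg hnonneg
  exact (hrev n).trans (by gcongr)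

end TendstoInLaw

end MomentConvergence

section PolynomialLaws

variable {ι κ : Type} [Fintype ι] [Fintype κ]

/-- The law of the random variable `P(N)`, where `N` is a standard Gaussian vector. -/
noncomputable def polyLaw (P : MvPolynomial ι ℝ) : Measure ℝ :=
  (gaussPi ι).map fun x => eval x P

instance (P : MvPolynomial ι ℝ) : IsProbabilityMeasure (polyLaw P) :=
  Measure.isProbabilityMeasure_map (continuous_eval P).aemeasurable

lemma integral_polyLaw {F : Type*} [NormedAddCommGroup F] [NormedSpace ℝ F]
    (P : MvPolynomial ι ℝ) {f : ℝ → F} (hf : Continuous f) :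
    ∫ y, f y ∂polyLaw P = ∫ x, f (eval x P) ∂gaussPi ι :=
  integral_map (continuous_eval P).aemeasurable hf.aestronglyMeasurable

lemma integral_pow_polyLaw (P : MvPolynomial ι ℝ) (n : ℕ) :
    ∫ y, y ^ n ∂polyLaw P = gaussExpect (P ^ n) := by
  simp only [integral_polyLaw P (continuous_pow n), gaussExpect_apply, map_pow]

lemma memLp_pow_polyLaw (P : MvPolynomial ι ℝ) (n : ℕ) :
    MemLp (fun y => y ^ n) 2 (polyLaw P) := by
  rw [memLp_two_iff_integrable_sq (continuous_pow n).aestronglyMeasurable, polyLaw,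
    integrable_map_measure (by fun_prop) (continuous_eval P).aemeasurable]
  simp only [Function.comp_def, ← map_pow]
  exact integrable_eval_gaussPi _

lemma polyLaw_rename {e : κ → ι} (he : Function.Injective e) (P : MvPolynomial κ ℝ) :
    polyLaw (rename e P) = polyLaw P := by
  have hmp := measurePreserving_comp_gaussPi he
  rw [polyLaw, polyLaw, ← hmp.map_eq,
    Measure.map_map (continuous_eval P).measurable hmp.measurable]
  simp only [eval_rename, Function.comp_def]

end PolynomialLaws

section GaussianForms

variable {κ η : Type} [Fintype η]

lemma map_sum_mul_gaussPi (d : η → ℝ) :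
    (gaussPi η).map (fun z => ∑ i, z i * d i) = gaussianReal 0 (∑ i, d i ^ 2).toNNReal := by
  have hindep : iIndepFun (fun i (z : η → ℝ) => z i * d i) (gaussPi η) :=
    iIndepFun_pi (X := fun i y => y * d i) fun _ => by fun_prop
  refine Measure.ext_of_charFun ?_
  rw [hindep.charFun_map_fun_sum_eq_prod fun i =>
    ((measurable_pi_apply i).mul_const (d i)).aemeasurable]
  ext t
  have hcoord (i : η) : charFun ((gaussPi η).map fun z => z i * d i) t
      = Complex.exp (-(d i ^ 2 * t ^ 2 / 2)) := by
    have hmap : (gaussPi η).map (fun z => z i * d i) = (gaussianReal 0 1).map (· * d i) := by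
      rw [← (measurePreserving_eval (fun _ : η => gaussianReal 0 1) i).map_eq,
        Measure.map_map (by fun_prop) (by fun_prop)]
      rfl
    rw [hmap, gaussianReal_map_mul_const, charFun_gaussianReal]
    simp
  rw [Finset.prod_apply, Finset.prod_congr rfl fun i _ => hcoord i, ← Complex.exp_sum,
    charFun_gaussianReal, Real.coe_toNNReal _ (by positivity)]
  simp [Finset.sum_div, Finset.sum_mul]

/-- The Gaussian linear form `∑ i, Gᵢ Dᵢ(N)`: the sharp operator with coefficients `D` in place of
the partial derivatives. The fresh Gaussian `Gᵢ` is the coordinate `Sum.inr i`. -/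
noncomputable def gaussForm (D : η → MvPolynomial κ ℝ) : MvPolynomial (κ ⊕ η) ℝ :=
  ∑ i, X (Sum.inr i) * rename Sum.inl (D i)

variable (D : η → MvPolynomial κ ℝ)

lemma eval_gaussForm (x : κ ⊕ η → ℝ) :
    eval x (gaussForm D) = ∑ i, x (Sum.inr i) * eval (x ∘ Sum.inl) (D i) := by
  simp only [gaussForm, map_sum, map_mul, eval_X, eval_rename]

lemma coe_toNNReal_eval_sum_sq (x : κ → ℝ) :
    ((eval x (∑ i, D i ^ 2)).toNNReal : ℝ) = eval x (∑ i, D i ^ 2) :=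
  Real.coe_toNNReal _ (by simp only [map_sum, map_pow]; positivity)

lemma gaussForm_smul (c : ℝ) : gaussForm (fun i => c • D i) = c • gaussForm D := by
  simp only [gaussForm, map_smul, mul_smul_comm, Finset.smul_sum]

lemma pderiv_inr_gaussForm (i : η) : pderiv (Sum.inr i) (gaussForm D) = rename Sum.inl (D i) := by
  classical
  have hcoeff (j : η) : pderiv (Sum.inr i : κ ⊕ η) (rename Sum.inl (D j)) = 0 :=
    pderiv_rename_of_notMem_range (by simp) _
  simp [gaussForm, hcoeff, pderiv_X, Pi.single_apply]

variable [Fintype κ]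

lemma integral_polyLaw_gaussForm {F : Type*} [NormedAddCommGroup F] [NormedSpace ℝ F]
    [SecondCountableTopology F] {f : ℝ → F} (hf : Continuous f)
    (hint : Integrable f (polyLaw (gaussForm D))) :
    ∫ y, f y ∂polyLaw (gaussForm D)
      = ∫ x, ∫ y, f y ∂gaussianReal 0 (eval x (∑ i, D i ^ 2)).toNNReal ∂gaussPi κ := by
  have hmp := measurePreserving_sumPiEquivProdPi (fun _ : κ ⊕ η => gaussianReal 0 1)
  let g : (κ → ℝ) × (η → ℝ) → ℝ := fun p => ∑ i, p.2 i * eval p.1 (D i)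
  have hg : Continuous g := by
    have (i : η) : Continuous fun p : (κ → ℝ) × (η → ℝ) => eval p.1 (D i) :=
      (continuous_eval (D i)).comp continuous_fst
    fun_prop
  have hlaw : polyLaw (gaussForm D) = ((gaussPi κ).prod (gaussPi η)).map g := by
    rw [gaussPi, gaussPi, ← hmp.map_eq, Measure.map_map hg.measurable hmp.measurable]
    exact congrArg (Measure.map · _) (funext (eval_gaussForm D))
  rw [hlaw] at hint ⊢
  rw [integral_map hg.aemeasurable hf.aestronglyMeasurable, integral_prod]
  · refine integral_congr_ae (ae_of_all _ fun x => ?_)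
    simp only [map_sum, map_pow, ← map_sum_mul_gaussPi]
    rw [integral_map (Measurable.aemeasurable (by fun_prop)) hf.aestronglyMeasurable]
  · exact hint.comp_aemeasurable hg.aemeasurable

lemma gaussExpect_gaussForm_sq :
    gaussExpect (gaussForm D ^ 2) = gaussExpect (∑ i, D i ^ 2) := by
  rw [← integral_pow_polyLaw, integral_polyLaw_gaussForm D (by fun_prop)
    ((memLp_pow_polyLaw _ 2).integrable one_le_two)]
  simp only [integral_sq_gaussianReal, coe_toNNReal_eval_sum_sq, gaussExpect_apply]

lemma gaussExpect_gaussForm_pow_four :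
    gaussExpect (gaussForm D ^ 4) = 3 * gaussExpect ((∑ i, D i ^ 2) ^ 2) := by
  rw [← integral_pow_polyLaw, integral_polyLaw_gaussForm D (by fun_prop)
    ((memLp_pow_polyLaw _ 4).integrable one_le_two)]
  simp only [integral_pow_four_gaussianReal, coe_toNNReal_eval_sum_sq, integral_const_mul,
    gaussExpect_apply, map_pow]

lemma charFun_polyLaw_gaussForm (t : ℝ) :
    charFun (polyLaw (gaussForm D)) t
      = ((∫ x, Real.exp (-(t ^ 2 / 2 * eval x (∑ i, D i ^ 2))) ∂gaussPi κ : ℝ) : ℂ) := by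
  rw [charFun_apply_real, integral_polyLaw_gaussForm D (by fun_prop)]
  · simp only [← charFun_apply_real, charFun_gaussianReal, coe_toNNReal_eval_sum_sq,
      ← integral_complex_ofReal]
    refine integral_congr_ae (ae_of_all _ fun x => ?_)
    push_cast
    ring_nf
  · refine Integrable.of_bound (by fun_prop) 1 (ae_of_all _ fun y => ?_)
    rw [← Complex.ofReal_mul, Complex.norm_exp_ofReal_mul_I]

lemma ornsteinUhlenbeck_gaussForm :
    ornsteinUhlenbeck (gaussForm D) = gaussForm fun i => ornsteinUhlenbeck (D i) - D i := by
  classical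
  refine (map_sum _ _ _).trans (Finset.sum_congr rfl fun i _ => ?_)
  have hX : ornsteinUhlenbeck (X (Sum.inr i) : MvPolynomial (κ ⊕ η) ℝ) = -X (Sum.inr i) := by
    simp [ornsteinUhlenbeck_apply, pderiv_X, Pi.single_apply, apply_ite]
  have hΓ : carreDuChamp (X (Sum.inr i)) (rename Sum.inl (D i)) = 0 := by
    simp [carreDuChamp_apply, pderiv_X, Pi.single_apply, pderiv_rename_of_notMem_range]
  rw [ornsteinUhlenbeck_mul, hX, hΓ, ornsteinUhlenbeck_rename Sum.inl_injective, map_sub]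
  ring

end GaussianForms

section GaussianFormCLT

lemma tendstoInLaw_of_tendsto_charFun {μs : ℕ → Measure ℝ} {μ : Measure ℝ}
    [∀ n, IsProbabilityMeasure (μs n)] [IsProbabilityMeasure μ]
    (h : ∀ t, Tendsto (fun n => charFun (μs n) t) atTop (𝓝 (charFun μ t))) :
    TendstoInLaw μs μ := by
  let νs (n : ℕ) : ProbabilityMeasure ℝ := ⟨μs n, inferInstance⟩
  let ν : ProbabilityMeasure ℝ := ⟨μ, inferInstance⟩
  have hlim : Tendsto νs atTop (𝓝 ν) := ProbabilityMeasure.tendsto_of_tendsto_charFun h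
  exact ProbabilityMeasure.tendsto_iff_forall_integral_tendsto.mp hlim

lemma abs_exp_neg_sub_exp_neg_le {a b : ℝ} (ha : 0 ≤ a) (hb : 0 ≤ b) :
    |Real.exp (-a) - Real.exp (-b)| ≤ |a - b| := by
  wlog hab : a ≤ b generalizing a b
  · rw [abs_sub_comm, abs_sub_comm a]
    exact this hb ha (le_of_not_ge hab)
  have hfactor : Real.exp (-a) - Real.exp (-b) = Real.exp (-a) * (1 - Real.exp (a - b)) := by
    rw [mul_sub, ← Real.exp_add]
    ring_nf
  have hle : Real.exp (-a) ≤ 1 := Real.exp_le_one_iff.mpr (neg_nonpos.mpr ha)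
  have hle' : Real.exp (a - b) ≤ 1 := Real.exp_le_one_iff.mpr (sub_nonpos.mpr hab)
  rw [hfactor, abs_of_nonneg (by have := Real.exp_pos (-a); nlinarith),
    abs_of_nonpos (sub_nonpos.mpr hab)]
  calc _ ≤ 1 * (1 - Real.exp (a - b)) := by gcongr
    _ ≤ -(a - b) := by linarith [Real.add_one_le_exp (a - b)]

lemma integral_abs_eval_le_sqrt {ι : Type} [Fintype ι] (P : MvPolynomial ι ℝ) :
    ∫ x, |eval x P| ∂gaussPi ι ≤ √(gaussExpect (P ^ 2)) := by
  refine Real.le_sqrt_of_sq_le ?_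
  have hmem : MemLp (fun x => |eval x P|) 2 (gaussPi ι) := by
    rw [memLp_two_iff_integrable_sq (continuous_eval P).abs.aestronglyMeasurable]
    simp only [sq_abs, ← map_pow]
    exact integrable_eval_gaussPi _
  have hvar := variance_nonneg (fun x => |eval x P|) (gaussPi ι)
  rw [variance_eq_sub hmem] at hvar
  simpa only [Pi.pow_apply, sq_abs, gaussExpect_apply, map_pow, sub_nonneg] using hvar

lemma abs_integral_exp_neg_sub_le {ι : Type} [Fintype ι] {G : MvPolynomial ι ℝ}
    (hG : ∀ x, 0 ≤ eval x G) {c v : ℝ} (hc : 0 ≤ c) (hv : 0 ≤ v) :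
    |∫ x, Real.exp (-(c * eval x G)) ∂gaussPi ι - Real.exp (-(c * v))|
      ≤ c * √(gaussExpect ((G - C v) ^ 2)) := by
  have hcont := continuous_eval G
  have hint : Integrable (fun x => Real.exp (-(c * eval x G))) (gaussPi ι) := by
    refine Integrable.of_bound (by fun_prop) 1 (ae_of_all _ fun x => ?_)
    rw [Real.norm_of_nonneg (Real.exp_nonneg _), Real.exp_le_one_iff]
    exact neg_nonpos.mpr (mul_nonneg hc (hG x))
  calc |∫ x, Real.exp (-(c * eval x G)) ∂gaussPi ι - Real.exp (-(c * v))|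
      = |∫ x, (Real.exp (-(c * eval x G)) - Real.exp (-(c * v))) ∂gaussPi ι| := by
        rw [integral_sub hint (integrable_const _), integral_const, probReal_univ, one_smul]
    _ ≤ ∫ x, c * |eval x (G - C v)| ∂gaussPi ι := by
        refine abs_integral_le_integral_abs.trans (integral_mono
          (hint.sub (integrable_const _)).abs ((integrable_eval_gaussPi _).abs.const_mul c)
          fun x => ?_)
        rw [map_sub, eval_C, ← abs_of_nonneg hc, ← abs_mul, abs_of_nonneg hc, mul_sub]
        exact abs_exp_neg_sub_exp_neg_le (mul_nonneg hc (hG x)) (mul_nonneg hc hv)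
    _ ≤ c * √(gaussExpect ((G - C v) ^ 2)) := by
        rw [integral_const_mul]
        gcongr
        exact integral_abs_eval_le_sqrt _

theorem tendstoInLaw_polyLaw_gaussForm {κ η : ℕ → Type} [∀ n, Fintype (κ n)]
    [∀ n, Fintype (η n)] {D : ∀ n, η n → MvPolynomial (κ n) ℝ} {v : ℝ≥0}
    (h : Tendsto (fun n => gaussExpect ((∑ i, D n i ^ 2 - C (v : ℝ)) ^ 2)) atTop (𝓝 0)) :
    TendstoInLaw (fun n => polyLaw (gaussForm (D n))) (gaussianReal 0 v) := by
  refine tendstoInLaw_of_tendsto_charFun fun t => ?_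
  have hv : charFun (gaussianReal 0 v) t = ((Real.exp (-(t ^ 2 / 2 * v)) : ℝ) : ℂ) := by
    rw [charFun_gaussianReal]
    push_cast
    ring_nf
  simp only [charFun_polyLaw_gaussForm, hv]
  refine (Complex.continuous_ofReal.tendsto _).comp (tendsto_iff_dist_tendsto_zero.mpr ?_)
  have hbound := h.sqrt.const_mul (t ^ 2 / 2)
  rw [Real.sqrt_zero, mul_zero] at hbound
  refine squeeze_zero (fun n => dist_nonneg) (fun n => ?_) hbound
  exact abs_integral_exp_neg_sub_le (fun x => by simp only [map_sum, map_pow]; positivity)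
    (by positivity) v.coe_nonneg

end GaussianFormCLT

lemma tendsto_gaussExpect_pow_of_tendstoInLaw {ι : ℕ → Type} [∀ n, Fintype (ι n)]
    {P : ∀ n, MvPolynomial (ι n) ℝ} {d : ℕ} (hdeg : ∀ n, (P n).totalDegree ≤ d)
    {μ : Measure ℝ} [IsProbabilityMeasure μ] {r : ℕ} (hr : Even r)
    (hμ : Integrable (fun y => y ^ (r * 2)) μ) (hlaw : TendstoInLaw (fun n => polyLaw (P n)) μ) :
    Tendsto (fun n => gaussExpect (P n ^ r)) atTop (𝓝 (∫ y, y ^ r ∂μ)) := by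
  obtain ⟨q, rfl⟩ := hr.two_dvd
  have hmem : MemLp (fun y => y ^ (2 * q)) 2 μ := by
    rw [memLp_two_iff_integrable_sq (continuous_pow _).aestronglyMeasurable]
    simpa only [← pow_mul] using hμ
  simp only [← integral_pow_polyLaw]
  refine hlaw.tendsto_integral_of_reverse_holder (continuous_pow _) hr.pow_nonneg
    (fun n => memLp_pow_polyLaw (P n) _) hmem (hypercontractiveConst_pos (q * d)) fun n => ?_
  have hdegq : (P n ^ q).totalDegree ≤ q * d :=
    (totalDegree_pow _ _).trans (Nat.mul_le_mul_left q (hdeg n))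
  have hhyper := gaussExpect_pow_four_le hdegq
  rw [← pow_mul, ← pow_mul, show q * 4 = 2 * q * 2 by ring, mul_comm q 2] at hhyper
  simpa only [← pow_mul, integral_pow_polyLaw] using hhyper

section SharpOperator

variable {K k : ℕ}

lemma pderivMulti_cons (i : Fin K) (f : Fin k → Fin K) (P : MvPolynomial (Fin K) ℝ) :
    pderivMulti (Fin.cons i f : Fin (k + 1) → Fin K) P = pderiv i (pderivMulti f P) := by
  simp [pderivMulti, List.ofFn_succ]

lemma pderivMulti_insertNth (j : Fin (k + 1)) (i : Fin K) (f : Fin k → Fin K)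
    (P : MvPolynomial (Fin K) ℝ) :
    pderivMulti (j.insertNth i f : Fin (k + 1) → Fin K) P = pderiv i (pderivMulti f P) := by
  induction k with
  | zero => rw [Fin.fin_one_eq_zero j, Fin.insertNth_zero', pderivMulti_cons]
  | succ k ih =>
    induction j using Fin.cases with
    | zero => rw [Fin.insertNth_zero', pderivMulti_cons]
    | succ j =>
      rw [← Fin.cons_self_tail f, Fin.insertNth_succ_cons, pderivMulti_cons, pderivMulti_cons, ih,
        pderiv_pderiv_comm]

lemma sharpPoly_zero (P : MvPolynomial (Fin K) ℝ) : sharpPoly 0 P = rename Sum.inl P := by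
  simp [sharpPoly, pderivMulti]

lemma pderiv_inl_sharpPoly (i : Fin K) (P : MvPolynomial (Fin K) ℝ) :
    pderiv (Sum.inl i) (sharpPoly k P) = ∑ f : Fin k → Fin K,
      rename Sum.inl (pderiv i (pderivMulti f P)) * ∏ l, X (Sum.inr (l, f l)) := by
  rw [sharpPoly, map_sum]
  refine Finset.sum_congr rfl fun f _ => ?_
  have hprod : (∏ l, X (Sum.inr (l, f l)) : MvPolynomial (Fin K ⊕ Fin k × Fin K) ℝ)
      = rename Sum.inr (∏ l, X (l, f l)) := by
    simp only [map_prod, rename_X]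
  rw [pderiv_mul, hprod, pderiv_rename_of_notMem_range (e := Sum.inr) (by simp), mul_zero, add_zero,
    pderiv_rename Sum.inl_injective]

/-- The embedding of Gaussian coordinates that inserts the fresh vector of `gaussForm` as the
`j`-th among the fresh vectors of `sharpPoly`. -/
def insertRow (j : Fin (k + 1)) :
    (Fin K ⊕ Fin k × Fin K) ⊕ Fin K → Fin K ⊕ Fin (k + 1) × Fin K :=
  Sum.elim (Sum.map id (Prod.map j.succAbove id)) fun i => Sum.inr (j, i)

lemma insertRow_injective (j : Fin (k + 1)) : Function.Injective (insertRow (K := K) j) := by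
  refine Function.Injective.sumElim ?_ ?_ ?_
  · exact Function.injective_id.sumMap
      (Fin.succAbove_right_injective.prodMap Function.injective_id)
  · exact Sum.inr_injective.comp (Prod.mk_right_injective j)
  · rintro (a | ⟨l, a⟩) b <;> simp

lemma sharpPoly_succ (j : Fin (k + 1)) (P : MvPolynomial (Fin K) ℝ) :
    sharpPoly (k + 1) P
      = rename (insertRow j) (gaussForm fun i => pderiv (Sum.inl i) (sharpPoly k P)) := by
  rw [sharpPoly, ← (Fin.insertNthEquiv (fun _ => Fin K) j).sum_comp, Fintype.sum_prod_type,
    gaussForm, map_sum]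
  refine Finset.sum_congr rfl fun i _ => ?_
  rw [pderiv_inl_sharpPoly]
  simp only [map_mul, map_sum, Finset.mul_sum]
  refine Finset.sum_congr rfl fun f _ => ?_
  have hpderiv : pderivMulti (Fin.insertNthEquiv (fun _ => Fin K) j (i, f)) P
      = pderiv i (pderivMulti f P) := pderivMulti_insertNth j i f P
  simp only [hpderiv, Fin.insertNthEquiv_apply, Fin.prod_univ_succAbove _ j,
    Fin.insertNth_apply_same, Fin.insertNth_apply_succAbove, map_prod, rename_X, rename_rename]
  exact mul_left_comm _ _ _

lemma sharpPoly_mem_wienerChaos {m : ℕ} {P : MvPolynomial (Fin K) ℝ}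
    (hP : P ∈ wienerChaos (Fin K) m) : sharpPoly k P ∈ wienerChaos (Fin K ⊕ Fin k × Fin K) m := by
  induction k with
  | zero =>
    rw [sharpPoly_zero]
    exact rename_mem_wienerChaos Sum.inl_injective hP
  | succ k ih =>
    rw [mem_wienerChaos] at ih ⊢
    simp only [sharpPoly_succ 0, ornsteinUhlenbeck_rename (insertRow_injective 0),
      ornsteinUhlenbeck_gaussForm, ornsteinUhlenbeck_pderiv, add_sub_cancel_right, ih,
      Derivation.map_smul, gaussForm_smul, map_smul]

/-- The conditional variance of `♯^{k+1}[F]` given `N` and the first `k` fresh Gaussian vectors. -/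
noncomputable def sharpCondVar (k : ℕ) (P : MvPolynomial (Fin K) ℝ) :
    MvPolynomial (Fin K ⊕ Fin k × Fin K) ℝ :=
  ∑ i, pderiv (Sum.inl i) (sharpPoly k P) ^ 2

lemma sharpCondVar_zero (P : MvPolynomial (Fin K) ℝ) :
    sharpCondVar 0 P = rename Sum.inl (carreDuChamp P P) := by
  simp only [sharpCondVar, sharpPoly_zero, pderiv_rename Sum.inl_injective, carreDuChamp_self,
    map_sum, map_pow]

lemma polyLaw_sharpPoly_succ (P : MvPolynomial (Fin K) ℝ) :
    polyLaw (sharpPoly (k + 1) P)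
      = polyLaw (gaussForm fun i => pderiv (Sum.inl i) (sharpPoly k P)) := by
  rw [sharpPoly_succ 0, polyLaw_rename (insertRow_injective 0)]

lemma gaussExpect_sharpPoly_succ_sq (P : MvPolynomial (Fin K) ℝ) :
    gaussExpect (sharpPoly (k + 1) P ^ 2) = gaussExpect (sharpCondVar k P) := by
  rw [sharpPoly_succ 0, ← map_pow, gaussExpect_rename (insertRow_injective 0),
    gaussExpect_gaussForm_sq, sharpCondVar]

lemma gaussExpect_sharpPoly_succ_pow_four (P : MvPolynomial (Fin K) ℝ) :
    gaussExpect (sharpPoly (k + 1) P ^ 4) = 3 * gaussExpect (sharpCondVar k P ^ 2) := by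
  rw [sharpPoly_succ 0, ← map_pow, gaussExpect_rename (insertRow_injective 0),
    gaussExpect_gaussForm_pow_four, sharpCondVar]

lemma carreDuChamp_sharpPoly_succ (P : MvPolynomial (Fin K) ℝ) :
    carreDuChamp (sharpPoly (k + 1) P) (sharpPoly (k + 1) P) = sharpCondVar (k + 1) P
      + ∑ j : Fin (k + 1), rename (insertRow j ∘ Sum.inl) (sharpCondVar k P) := by
  rw [carreDuChamp_self, Fintype.sum_sum_type, Fintype.sum_prod_type, sharpCondVar]
  congr 1
  refine Finset.sum_congr rfl fun j _ => ?_
  have hpderiv (i : Fin K) : pderiv (Sum.inr (j, i)) (sharpPoly (k + 1) P)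
      = rename (insertRow j ∘ Sum.inl) (pderiv (Sum.inl i) (sharpPoly k P)) := by
    rw [sharpPoly_succ j, ← rename_rename,
      ← pderiv_inr_gaussForm fun i => pderiv (Sum.inl i) (sharpPoly k P)]
    exact pderiv_rename (insertRow_injective j) (Sum.inr i) _
  simp only [hpderiv, sharpCondVar, map_sum, map_pow]

lemma sub_sum_sq_le {β : Type*} (s : Finset β) (a : ℝ) (b : β → ℝ) :
    (a - ∑ j ∈ s, b j) ^ 2 ≤ 2 * a ^ 2 + 2 * s.card * ∑ j ∈ s, b j ^ 2 := by
  have hcs := sq_sum_le_card_mul_sum_sq (s := s) (f := b)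
  nlinarith [sq_nonneg (a + ∑ j ∈ s, b j)]

lemma gaussExpect_sharpCondVar_succ_sub_C_sq_le {m : ℕ} {P : MvPolynomial (Fin K) ℝ}
    (hP : P ∈ wienerChaos (Fin K) m) (σ : ℝ) :
    gaussExpect ((sharpCondVar (k + 1) P - C ((m - (k + 1)) * σ)) ^ 2)
      ≤ 2 * (m ^ 2 + (k + 1) ^ 2) * gaussExpect ((sharpCondVar k P - C σ) ^ 2) := by
  set S := sharpPoly (k + 1) P with hS
  set A := carreDuChamp S S - C (m * σ)
  let B (j : Fin (k + 1)) := rename (insertRow j ∘ Sum.inl) (sharpCondVar k P - C σ)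
  have hdecomp : sharpCondVar (k + 1) P - C ((m - (k + 1)) * σ) = A - ∑ j, B j := by
    simp only [A, B, hS, carreDuChamp_sharpPoly_succ, map_sub, rename_C, Finset.sum_sub_distrib,
      Finset.sum_const, Finset.card_univ, Fintype.card_fin, nsmul_eq_mul, map_mul, map_add,
      map_one, map_natCast]
    push_cast
    ring
  have hA : gaussExpect (A ^ 2) ≤ m ^ 2 * gaussExpect ((sharpCondVar k P - C σ) ^ 2) := by
    refine (gaussExpect_carreDuChamp_sub_C_sq_le (sharpPoly_mem_wienerChaos hP) σ).trans_eq ?_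
    rw [gaussExpect_sharpPoly_succ_sq, gaussExpect_sharpPoly_succ_pow_four, gaussExpect_sub_C_sq]
    ring
  have hB (j : Fin (k + 1)) :
      gaussExpect (B j ^ 2) = gaussExpect ((sharpCondVar k P - C σ) ^ 2) := by
    rw [← map_pow, gaussExpect_rename ((insertRow_injective j).comp Sum.inl_injective)]
  calc _ ≤ gaussExpect ((2 : ℝ) • A ^ 2 + (2 * (k + 1) : ℝ) • ∑ j, B j ^ 2) := by
        rw [hdecomp]
        refine gaussExpect_mono fun x => ?_
        simpa [smul_eval] using
          sub_sum_sq_le Finset.univ (eval x A) fun j => eval x (B j)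
    _ = 2 * gaussExpect (A ^ 2)
          + 2 * (k + 1) * ((k + 1) * gaussExpect ((sharpCondVar k P - C σ) ^ 2)) := by
        simp [hB]
    _ ≤ _ := by linarith

end SharpOperator

section CentralLimitTheorem

variable {m : ℕ} {K : ℕ → ℕ} {P : ∀ n, MvPolynomial (Fin (K n)) ℝ}

lemma cast_descFactorial_succ (m k : ℕ) :
    (m.descFactorial (k + 1) : ℝ) = (m - k) * m.descFactorial k := by
  rw [← descPochhammer_eval_eq_descFactorial, ← descPochhammer_eval_eq_descFactorial,
    descPochhammer_succ_eval, mul_comm]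

theorem tendsto_gaussExpect_sharpCondVar_sub_C_sq {v : ℝ}
    (hP : ∀ n, P n ∈ wienerChaos (Fin (K n)) m)
    (h2 : Tendsto (fun n => gaussExpect (P n ^ 2)) atTop (𝓝 v))
    (h4 : Tendsto (fun n => gaussExpect (P n ^ 4)) atTop (𝓝 (3 * v ^ 2))) (k : ℕ) :
    Tendsto (fun n => gaussExpect ((sharpCondVar k (P n) - C (v * m.descFactorial (k + 1))) ^ 2))
      atTop (𝓝 0) := by
  have hnonneg (k n : ℕ) (a : ℝ) : 0 ≤ gaussExpect ((sharpCondVar k (P n) - C a) ^ 2) :=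
    gaussExpect_nonneg fun x => by rw [map_pow]; exact sq_nonneg _
  induction k with
  | zero =>
    have hbound : Tendsto (fun n => (m : ℝ) ^ 2 * (gaussExpect (P n ^ 4) / 3
        - 2 * v * gaussExpect (P n ^ 2) + v ^ 2)) atTop (𝓝 0) := by
      have hlim := (((h4.div_const 3).sub (h2.const_mul (2 * v))).add_const (v ^ 2)).const_mul
        ((m : ℝ) ^ 2)
      convert hlim using 2
      ring
    refine squeeze_zero (fun n => hnonneg 0 n _) (fun n => ?_) hbound
    convert gaussExpect_carreDuChamp_sub_C_sq_le (hP n) v using 1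
    rw [sharpCondVar_zero, ← rename_C Sum.inl, ← map_sub, ← map_pow,
      gaussExpect_rename Sum.inl_injective, zero_add, Nat.descFactorial_one, mul_comm]
  | succ k ih =>
    have hbound := ih.const_mul (2 * ((m : ℝ) ^ 2 + (k + 1) ^ 2))
    rw [mul_zero] at hbound
    refine squeeze_zero (fun n => hnonneg (k + 1) n _) (fun n => ?_) hbound
    rw [cast_descFactorial_succ m (k + 1), mul_left_comm, Nat.cast_succ]
    exact gaussExpect_sharpCondVar_succ_sub_C_sq_le (hP n) _

theorem tendstoInLaw_polyLaw_sharpPoly_succ {v : ℝ≥0} (hP : ∀ n, P n ∈ wienerChaos (Fin (K n)) m)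
    (h2 : Tendsto (fun n => gaussExpect (P n ^ 2)) atTop (𝓝 v))
    (h4 : Tendsto (fun n => gaussExpect (P n ^ 4)) atTop (𝓝 (3 * v ^ 2))) (k : ℕ) :
    TendstoInLaw (fun n => polyLaw (sharpPoly (k + 1) (P n)))
      (gaussianReal 0 (v * m.descFactorial (k + 1))) := by
  simp only [polyLaw_sharpPoly_succ]
  refine tendstoInLaw_polyLaw_gaussForm ?_
  push_cast
  exact tendsto_gaussExpect_sharpCondVar_sub_C_sq hP h2 h4 k

theorem sharp_operator_clt_general (m k : ℕ) (v : ℝ≥0) (K : ℕ → ℕ)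
    (P : (n : ℕ) → MvPolynomial (Fin (K n)) ℝ) (hchaos : ∀ n, P n ∈ chaos (K n) m)
    (hlaw : TendstoInLaw (fun n => polyLaw (P n)) (gaussianReal 0 v)) :
    TendstoInLaw (fun n => polyLaw (sharpPoly k (P n)))
      (gaussianReal 0 (v * m.descFactorial k)) := by
  cases k with
  | zero => simpa [sharpPoly_zero, polyLaw_rename Sum.inl_injective] using hlaw
  | succ k =>
    have hP (n : ℕ) : P n ∈ wienerChaos (Fin (K n)) m := chaos_le_wienerChaos (K n) m (hchaos n)
    have hmoment {r : ℕ} (hr : Even r) :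
        Tendsto (fun n => gaussExpect (P n ^ r)) atTop (𝓝 (∫ y, y ^ r ∂gaussianReal 0 v)) :=
      tendsto_gaussExpect_pow_of_tendstoInLaw (fun n => totalDegree_le_of_mem_wienerChaos (hP n))
        hr (integrable_pow_gaussianReal v _) hlaw
    refine tendstoInLaw_polyLaw_sharpPoly_succ hP ?_ ?_ k
    · simpa only [integral_sq_gaussianReal] using hmoment even_two
    · simpa only [integral_pow_four_gaussianReal] using hmoment (r := 4) (by decide)

end CentralLimitTheorem

/-- Central limit theorem for iterated sharp operators on a Wiener chaos of
degree `m`: if `F_n → N(0,1)` in law then `♯^k[F_n] → N(0, m(m−1)⋯(m−k+1))` in law. -/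
theorem sharp_operator_clt (m k : ℕ) (hk1 : 1 ≤ k) (hkm : k ≤ m) (K : ℕ → ℕ)
    (P : (n : ℕ) → MvPolynomial (Fin (K n)) ℝ)
    (hchaos : ∀ n, P n ∈ chaos (K n) m)
    (hlaw : TendstoInLaw
      (fun n => Measure.map (fun x => eval x (P n)) (gaussPi (Fin (K n))))
      (gaussianReal 0 1)) :
    TendstoInLaw
      (fun n => Measure.map (fun y => eval y (sharpPoly k (P n)))
        (gaussPi (Fin (K n) ⊕ Fin k × Fin (K n))))
      (gaussianReal 0 (m.descFactorial k : ℝ≥0)) := by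
  have h := sharp_operator_clt_general m k 1 K P hchaos hlaw
  rwa [one_mul] at h
end

section
/- Fix d, m ∈ ℕ. Let (F⃗_n) be a sequence of random vectors F⃗_n = (P_{n,1}(N^{(n)}), …, P_{n,d}(N^{(n)})), N^{(n)} ~ γ_{K_n}, where each P_{n,i} is a polynomial of total degree at most m, and assume sup_n E[‖F⃗_n‖²] < ∞. Assume that for every sequence (a⃗_n) in the unit sphere S^{d−1} ⊂ ℝ^d and every q ≥ 1, limsup_{n→∞} E[ Γ[F⃗_n·a⃗_n, F⃗_n·a⃗_n]^{−q} ] < ∞, where Γ[F⃗_n·a⃗, F⃗_n·a⃗] := Σ_{k=1}^{K_n} ( Σ_{i=1}^d a_i ∂_k P_{n,i}(N^{(n)}) )². Then for every q ≥ 1, limsup_{n→∞} E[ (det Γ(F⃗_n))^{−q} ] < ∞, where Γ(F⃗_n)_{ij} := Σ_{k=1}^{K_n} ∂_k P_{n,i}(N^{(n)}) ∂_k P_{n,j}(N^{(n)}). -/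
open MeasureTheory ProbabilityTheory MvPolynomial Filter Topology
open scoped ENNReal NNReal

/-- The Malliavin matrix of a vector of polynomial functionals. -/
noncomputable def malMatrix {K d : ℕ} (P : Fin d → MvPolynomial (Fin K) ℝ) (x : Fin K → ℝ) :
    Matrix (Fin d) (Fin d) ℝ :=
  Matrix.of fun i j => ∑ k, eval x (pderiv k (P i)) * eval x (pderiv k (P j))

/-!
In polar coordinates the volume of the ellipsoid `{xᵀ S x < 1}` in dimension `d` gives the exact
identity `(det S)^(-1/2) = ⨍ (θᵀ S θ)^(-d/2) dθ` over the unit sphere, for `S` positive definite.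
Jensen's inequality turns it into `(det S)^(-q) ≤ ⨍ (θᵀ S θ)^(-dq) dθ` for `q ≥ 1/2`, which extends
to positive semidefinite `S` by perturbation. For a random `S`, Tonelli bounds `E (det S)^(-q)` by
`sup_θ E (θᵀ S θ)^(-dq)`, and a supremum over the sphere is controlled by the hypothesis on
sequences: evaluate it along near-maximizers. For the Malliavin matrix, `aᵀ Γ a` is the square field
of `F⃗·a`.
-/

open scoped Matrix

section Polar

variable {E : Type*} [NormedAddCommGroup E] [NormedSpace ℝ E] [FiniteDimensional ℝ E]
  [MeasurableSpace E] [BorelSpace E] (μ : Measure E) [μ.IsAddHaarMeasure]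

lemma addHaar_eq_lintegral_toSphere [Nontrivial E] {s : Set E} (hs : MeasurableSet s) :
    μ s = ∫⁻ θ, Measure.volumeIoiPow (Module.finrank ℝ E - 1) {r | r.1 • θ.1 ∈ s} ∂μ.toSphere := by
  have hpolar := μ.measurePreserving_homeomorphUnitSphereProd.symm
    (homeomorphUnitSphereProd E).toMeasurableEquiv
  have hs' : MeasurableSet (((↑) : ({0}ᶜ : Set E) → E) ⁻¹' s) := measurable_subtype_coe hs
  calc μ s = μ (s ∩ {0}ᶜ) :=
        (measure_inter_conull (by simp)).symm
    _ = μ.comap ((↑) : ({0}ᶜ : Set E) → E) ((↑) ⁻¹' s) := by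
        rw [comap_subtype_coe_apply (measurableSet_singleton _).compl,
          Subtype.image_preimage_coe, Set.inter_comm]
    _ = _ := by
        rw [← hpolar.measure_preimage hs'.nullMeasurableSet,
          Measure.prod_apply (hpolar.measurable hs')]
        rfl

lemma succ_mul_volumeIoiPow_rpow_mul_lt_one (n : ℕ) {p c : ℝ} (hp : 0 < p) (hc : 0 < c) :
    ((n + 1 : ℕ) : ℝ≥0∞) * Measure.volumeIoiPow n {r | r.1 ^ p * c < 1} =
      ENNReal.ofReal c ^ (-((n + 1 : ℕ) / p)) := by
  have hray : {r : Set.Ioi (0 : ℝ) | r.1 ^ p * c < 1} =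
      Set.Iio ⟨c ^ (-p⁻¹), Real.rpow_pos_of_pos hc _⟩ := by
    ext r
    change r.1 ^ p * c < 1 ↔ r.1 < c ^ (-p⁻¹)
    rw [← lt_div_iff₀ hc, one_div, ← Real.lt_rpow_inv_iff_of_pos r.2.out.le (by positivity) hp,
      Real.inv_rpow hc.le, Real.rpow_neg hc.le]
  rw [hray, Measure.volumeIoiPow_apply_Iio, ← ENNReal.ofReal_natCast,
    ← ENNReal.ofReal_mul (by positivity), ENNReal.ofReal_rpow_of_pos hc, ← Nat.cast_succ,
    mul_div_cancel₀ _ (by positivity), ← Real.rpow_mul_natCast hc.le]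
  congr 2
  push_cast
  ring

lemma finrank_mul_addHaar_lt_one_eq_lintegral_toSphere [Nontrivial E] {g : E → ℝ} {p : ℝ}
    (hg : Measurable g) (hp : 0 < p) (hhom : ∀ r : ℝ, 0 < r → ∀ x, g (r • x) = r ^ p * g x)
    (hpos : ∀ θ : Metric.sphere (0 : E) 1, 0 < g θ) :
    Module.finrank ℝ E * μ {x | g x < 1} =
      ∫⁻ θ, ENNReal.ofReal (g θ) ^ (-(Module.finrank ℝ E / p)) ∂μ.toSphere := by
  have hdim : Module.finrank ℝ E - 1 + 1 = Module.finrank ℝ E :=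
    Nat.sub_add_cancel Module.finrank_pos
  rw [addHaar_eq_lintegral_toSphere μ (measurableSet_lt hg measurable_const),
    ← lintegral_const_mul' _ _ (ENNReal.natCast_ne_top _)]
  refine lintegral_congr fun θ => ?_
  have hray := succ_mul_volumeIoiPow_rpow_mul_lt_one (Module.finrank ℝ E - 1) hp (hpos θ)
  rw [hdim] at hray
  rw [← hray]
  congr 2
  ext r
  simp only [Set.mem_ofPred_eq, hhom r.1 r.2]

end Polar

lemma rpow_lintegral_le_lintegral_rpow {α : Type*} [MeasurableSpace α] (μ : Measure α)
    [IsProbabilityMeasure μ] {f : α → ℝ≥0∞} (hf : AEMeasurable f μ) {s : ℝ} (hs : 1 ≤ s) :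
    (∫⁻ a, f a ∂μ) ^ s ≤ ∫⁻ a, f a ^ s ∂μ := by
  have hmono := eLpNorm'_le_eLpNorm'_of_exponent_le one_pos hs μ hf.aestronglyMeasurable
  have hs0 : 0 < s := one_pos.trans_le hs
  simp only [eLpNorm', enorm_eq_self, ENNReal.rpow_one, div_one, one_div] at hmono
  rwa [ENNReal.le_rpow_inv_iff hs0] at hmono

lemma limsup_iSup_lt_top_of_forall_selection {α : ℕ → Type*} [∀ n, Nonempty (α n)]
    {I : ∀ n, α n → ℝ≥0∞}
    (h : ∀ a : ∀ n, α n, limsup (fun n => I n (a n)) atTop < ⊤) :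
    limsup (fun n => ⨆ b, I n b) atTop < ⊤ := by
  -- Truncating at level `n` makes near-maximizers exist even where the supremum is infinite, and
  -- along the sequence of near-maximizers the truncation is eventually inactive.
  have hnear : ∀ n : ℕ, ∃ a, min (⨆ b, I n b) n ≤ I n a + 1 := fun n => by
    rcases eq_or_ne (min (⨆ b, I n b) n) 0 with h0 | h0
    · exact ⟨Classical.arbitrary _, by simp [h0]⟩
    · have hlt : min (⨆ b, I n b) n - 1 < ⨆ b, I n b :=
        (ENNReal.sub_lt_self (by simp) h0 one_ne_zero).trans_le (min_le_left _ _)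
      obtain ⟨a, ha⟩ := lt_iSup_iff.1 hlt
      exact ⟨a, tsub_le_iff_right.1 ha.le⟩
  choose a ha using hnear
  obtain ⟨M, haM, hM⟩ := exists_between (h a)
  have hM1 : M + 1 < ⊤ := by simpa using hM
  refine (limsup_le_of_le (by isBoundedDefault) ?_).trans_lt hM1
  obtain ⟨N, hN⟩ := ENNReal.exists_nat_gt hM1.ne
  filter_upwards [eventually_lt_of_limsup_lt haM, eventually_ge_atTop N] with n hn hNn
  have hmin : min (⨆ b, I n b) n ≤ M + 1 := (ha n).trans (by gcongr)
  exact (min_le_iff.1 hmin).resolve_right (hN.trans_le (by exact_mod_cast hNn)).not_ge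

section QuadForm

variable {ι : Type*} [Fintype ι]

/-- The quadratic form `x ↦ xᵀ S x`, on `EuclideanSpace` so that its restriction to the
Euclidean unit sphere makes sense. -/
def quadForm (S : Matrix ι ι ℝ) (x : EuclideanSpace ℝ ι) : ℝ :=
  x.ofLp ⬝ᵥ S *ᵥ x.ofLp

lemma quadForm_smul (S : Matrix ι ι ℝ) (r : ℝ) (x : EuclideanSpace ℝ ι) :
    quadForm S (r • x) = r ^ 2 * quadForm S x := by
  simp only [quadForm, WithLp.ofLp_smul, Matrix.mulVec_smul, smul_dotProduct, dotProduct_smul,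
    smul_eq_mul]
  ring

lemma quadForm_add (S T : Matrix ι ι ℝ) (x : EuclideanSpace ℝ ι) :
    quadForm (S + T) x = quadForm S x + quadForm T x := by
  simp only [quadForm, Matrix.add_mulVec, dotProduct_add]

lemma measurable_quadForm {α : Type*} [MeasurableSpace α] {S : α → Matrix ι ι ℝ}
    {x : α → EuclideanSpace ℝ ι} (hS : ∀ i j, Measurable fun a => S a i j) (hx : Measurable x) :
    Measurable fun a => quadForm (S a) (x a) := by
  simp only [quadForm, dotProduct, Matrix.mulVec]
  fun_prop

lemma quadForm_pos {S : Matrix ι ι ℝ} (hS : S.PosDef) {x : EuclideanSpace ℝ ι}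
    (hx : x ≠ 0) : 0 < quadForm S x := by
  simpa [quadForm] using hS.dotProduct_mulVec_pos ((WithLp.ofLp_eq_zero 2).not.2 hx)

lemma quadForm_transpose_mul_self {κ : Type*} [Fintype κ] (B : Matrix κ ι ℝ)
    (x : EuclideanSpace ℝ ι) : quadForm (Bᵀ * B) x = ∑ k, (B *ᵥ x.ofLp) k ^ 2 := by
  rw [quadForm, ← Matrix.mulVec_mulVec, Matrix.dotProduct_mulVec, Matrix.vecMul_transpose]
  simp only [dotProduct, sq]

variable [DecidableEq ι]

lemma quadForm_smul_one (c : ℝ) (x : EuclideanSpace ℝ ι) :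
    quadForm (c • (1 : Matrix ι ι ℝ)) x = c * ‖x‖ ^ 2 := by
  rw [quadForm, Matrix.smul_mulVec, Matrix.one_mulVec, dotProduct_smul, smul_eq_mul,
    EuclideanSpace.real_norm_sq_eq]
  simp only [dotProduct, sq]

lemma volume_quadForm_lt_one {S : Matrix ι ι ℝ} (hS : S.PosDef) :
    volume {x : EuclideanSpace ℝ ι | quadForm S x < 1} =
      ENNReal.ofReal S.det ^ (-(1 / 2) : ℝ) *
        volume (Metric.ball (0 : EuclideanSpace ℝ ι) 1) := by
  obtain ⟨B, rfl⟩ : ∃ B : Matrix ι ι ℝ, S = Bᵀ * B := by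
    open scoped MatrixOrder in
    obtain ⟨B, hB⟩ := CStarAlgebra.nonneg_iff_eq_star_mul_self.1 hS.posSemidef.nonneg
    exact ⟨B, by rw [hB, Matrix.star_eq_conjTranspose,
      Matrix.conjTranspose_eq_transpose_of_trivial]⟩
  have hdet : (Bᵀ * B).det = B.det ^ 2 := by rw [Matrix.det_mul, Matrix.det_transpose, sq]
  have hB : B.det ≠ 0 := fun h => hS.det_pos.ne' (by simp [hdet, h])
  have hset : {x : EuclideanSpace ℝ ι | quadForm (Bᵀ * B) x < 1} =
      Matrix.toEuclideanLin B ⁻¹' Metric.ball 0 1 := by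
    ext x
    rw [Set.mem_ofPred_eq, quadForm_transpose_mul_self, Set.mem_preimage, mem_ball_zero_iff,
      ← sq_lt_one_iff₀ (norm_nonneg _), EuclideanSpace.real_norm_sq_eq, Matrix.ofLp_toLpLin,
      Matrix.toLin'_apply]
  rw [hset, Measure.addHaar_preimage_linearMap _ (by rwa [LinearMap.det_toLpLin]),
    LinearMap.det_toLpLin, hdet, ENNReal.ofReal_rpow_of_pos (by positivity), ← sq_abs,
    Real.rpow_neg (by positivity), ← Real.sqrt_eq_rpow, Real.sqrt_sq (abs_nonneg _), abs_inv]

end QuadForm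

section SphereUniform

variable (ι : Type*) [Fintype ι]

/-- The uniform probability measure on the Euclidean unit sphere of `ℝ^ι` (the zero measure when
`ι` is empty). -/
noncomputable def sphereUniform : Measure (Metric.sphere (0 : EuclideanSpace ℝ ι) 1) :=
  ((volume : Measure (EuclideanSpace ℝ ι)).toSphere Set.univ)⁻¹ • volume.toSphere

instance [Nonempty ι] : IsProbabilityMeasure (sphereUniform ι) :=
  have : NeZero (volume : Measure (EuclideanSpace ℝ ι)).toSphere :=
    ⟨Measure.toSphere_ne_zero _⟩
  inferInstanceAs (IsProbabilityMeasure ((_ : ℝ≥0∞)⁻¹ • _))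

variable {ι} [DecidableEq ι] [Nonempty ι]

lemma det_rpow_neg_half_eq_lintegral_sphereUniform {S : Matrix ι ι ℝ} (hS : S.PosDef) :
    ENNReal.ofReal S.det ^ (-(1 / 2) : ℝ) =
      ∫⁻ θ, ENNReal.ofReal (quadForm S θ) ^ (-(Fintype.card ι / 2 : ℝ)) ∂sphereUniform ι := by
  have hpolar := finrank_mul_addHaar_lt_one_eq_lintegral_toSphere
    (volume : Measure (EuclideanSpace ℝ ι)) (g := quadForm S) (p := 2)
    (measurable_quadForm (fun _ _ => measurable_const) measurable_id) two_pos
    (fun r _ x => by rw [quadForm_smul, Real.rpow_two])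
    (fun θ => quadForm_pos hS (ne_zero_of_mem_unit_sphere θ))
  rw [volume_quadForm_lt_one hS, mul_left_comm, ← Measure.toSphere_apply_univ,
    finrank_euclideanSpace] at hpolar
  rw [sphereUniform, lintegral_smul_measure, ← hpolar, smul_eq_mul, mul_comm, mul_assoc,
    ENNReal.mul_inv_cancel _ (measure_ne_top _ _), mul_one]
  exact Measure.measure_univ_ne_zero.2 (Measure.toSphere_ne_zero _)

lemma det_rpow_neg_le_lintegral_sphereUniform_of_posDef {S : Matrix ι ι ℝ} (hS : S.PosDef) {q : ℝ}
    (hq : 1 / 2 ≤ q) :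
    ENNReal.ofReal S.det ^ (-q) ≤
      ∫⁻ θ, ENNReal.ofReal (quadForm S θ) ^ (-(Fintype.card ι * q)) ∂sphereUniform ι := by
  have hmeas : Measurable fun θ : Metric.sphere (0 : EuclideanSpace ℝ ι) 1 => quadForm S θ :=
    measurable_quadForm (fun _ _ => measurable_const) measurable_subtype_coe
  calc ENNReal.ofReal S.det ^ (-q) = (ENNReal.ofReal S.det ^ (-(1 / 2) : ℝ)) ^ (2 * q) := by
        rw [← ENNReal.rpow_mul]
        ring_nf
    _ ≤ ∫⁻ θ, (ENNReal.ofReal (quadForm S θ) ^ (-(Fintype.card ι / 2 : ℝ))) ^ (2 * q)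
          ∂sphereUniform ι := by
        rw [det_rpow_neg_half_eq_lintegral_sphereUniform hS]
        exact rpow_lintegral_le_lintegral_rpow _ (hmeas.ennreal_ofReal.pow_const _).aemeasurable
          (by linarith)
    _ = _ := by
        refine lintegral_congr fun θ => ?_
        rw [← ENNReal.rpow_mul]
        ring_nf

lemma det_rpow_neg_le_lintegral_sphereUniform {S : Matrix ι ι ℝ} (hS : S.PosSemidef) {q : ℝ}
    (hq : 1 / 2 ≤ q) :
    ENNReal.ofReal S.det ^ (-q) ≤
      ∫⁻ θ, ENNReal.ofReal (quadForm S θ) ^ (-(Fintype.card ι * q)) ∂sphereUniform ι := by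
  have hcont : Continuous fun ε : ℝ => ENNReal.ofReal (S + ε • (1 : Matrix ι ι ℝ)).det ^ (-q) :=
    ENNReal.continuous_rpow_const.comp
      (ENNReal.continuous_ofReal.comp (Continuous.matrix_det (by fun_prop)))
  -- For singular `S` the left side is `∞`; it is reached as the limit of `S + ε` as `ε ↓ 0`.
  have hlim : Tendsto (fun ε : ℝ => ENNReal.ofReal (S + ε • (1 : Matrix ι ι ℝ)).det ^ (-q))
      (𝓝[>] 0) (𝓝 (ENNReal.ofReal S.det ^ (-q))) := by
    simpa using (hcont.tendsto 0).mono_left nhdsWithin_le_nhds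
  refine le_of_tendsto hlim ?_
  filter_upwards [self_mem_nhdsWithin] with ε (hε : 0 < ε)
  refine (det_rpow_neg_le_lintegral_sphereUniform_of_posDef
    (Matrix.PosDef.posSemidef_add hS (Matrix.PosDef.one.smul hε)) hq).trans
    (lintegral_mono fun θ => ?_)
  have hquad : quadForm S θ ≤ quadForm (S + ε • (1 : Matrix ι ι ℝ)) θ := by
    rw [quadForm_add, quadForm_smul_one]
    exact le_add_of_nonneg_right (by positivity)
  simp only [ENNReal.rpow_neg]
  gcongr

lemma lintegral_det_rpow_neg_le_iSup_sphere {Ω : Type*} [MeasurableSpace Ω] (μ : Measure Ω)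
    [SFinite μ] {S : Ω → Matrix ι ι ℝ} (hmeas : ∀ i j, Measurable fun ω => S ω i j)
    (hS : ∀ ω, (S ω).PosSemidef) {q : ℝ} (hq : 1 / 2 ≤ q) :
    ∫⁻ ω, ENNReal.ofReal (S ω).det ^ (-q) ∂μ ≤
      ⨆ θ : Metric.sphere (0 : EuclideanSpace ℝ ι) 1,
        ∫⁻ ω, ENNReal.ofReal (quadForm (S ω) θ) ^ (-(Fintype.card ι * q)) ∂μ := by
  have hquad : Measurable fun z : Ω × Metric.sphere (0 : EuclideanSpace ℝ ι) 1 =>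
      quadForm (S z.1) z.2 :=
    measurable_quadForm (fun i j => (hmeas i j).comp measurable_fst)
      (measurable_subtype_coe.comp measurable_snd)
  calc ∫⁻ ω, ENNReal.ofReal (S ω).det ^ (-q) ∂μ
      ≤ ∫⁻ ω, ∫⁻ θ, ENNReal.ofReal (quadForm (S ω) θ) ^ (-(Fintype.card ι * q))
          ∂sphereUniform ι ∂μ :=
        lintegral_mono fun ω => det_rpow_neg_le_lintegral_sphereUniform (hS ω) hq
    _ = ∫⁻ θ, ∫⁻ ω, ENNReal.ofReal (quadForm (S ω) θ) ^ (-(Fintype.card ι * q)) ∂μ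
          ∂sphereUniform ι :=
        lintegral_lintegral_swap (hquad.ennreal_ofReal.pow_const _).aemeasurable
    _ ≤ ∫⁻ _, ⨆ θ : Metric.sphere (0 : EuclideanSpace ℝ ι) 1,
          ∫⁻ ω, ENNReal.ofReal (quadForm (S ω) θ) ^ (-(Fintype.card ι * q)) ∂μ ∂sphereUniform ι :=
        lintegral_mono fun θ => le_iSup (fun θ : Metric.sphere (0 : EuclideanSpace ℝ ι) 1 =>
          ∫⁻ ω, ENNReal.ofReal (quadForm (S ω) θ) ^ (-(Fintype.card ι * q)) ∂μ) θ
    _ = _ := by rw [lintegral_const, measure_univ, mul_one]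

end SphereUniform

theorem dimension_upgrade_general {ι : Type*} [Fintype ι] [DecidableEq ι] [Nonempty ι]
    {Ω : ℕ → Type*} [∀ n, MeasurableSpace (Ω n)] (μ : ∀ n, Measure (Ω n)) [∀ n, SFinite (μ n)]
    {S : ∀ n, Ω n → Matrix ι ι ℝ} (hmeas : ∀ n i j, Measurable fun ω => S n ω i j)
    (hS : ∀ n ω, (S n ω).PosSemidef) {q : ℝ} (hq : 1 / 2 ≤ q)
    (hsphere : ∀ θ : ℕ → Metric.sphere (0 : EuclideanSpace ℝ ι) 1,
      limsup (fun n => ∫⁻ ω, ENNReal.ofReal (quadForm (S n ω) (θ n)) ^ (-(Fintype.card ι * q)) ∂μ n)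
        atTop < ⊤) :
    limsup (fun n => ∫⁻ ω, ENNReal.ofReal (S n ω).det ^ (-q) ∂μ n) atTop < ⊤ :=
  have := (sphereUniform ι).nonempty_of_neZero
  (limsup_le_limsup (.of_forall fun n =>
    lintegral_det_rpow_neg_le_iSup_sphere (μ n) (hmeas n) (hS n) hq)).trans_lt
    (limsup_iSup_lt_top_of_forall_selection hsphere)

section Malliavin

instance (ι : Type) [Fintype ι] : IsProbabilityMeasure (gaussPi ι) :=
  inferInstanceAs (IsProbabilityMeasure (Measure.pi _))

variable {K d : ℕ} (P : Fin d → MvPolynomial (Fin K) ℝ)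

/-- The Jacobian `∂ₖ Pᵢ` of a vector of polynomials, with rows indexed by the Gaussian
coordinates `k`, so that the Malliavin matrix is `Jᵀ J`. -/
noncomputable def polyJacobian (x : Fin K → ℝ) : Matrix (Fin K) (Fin d) ℝ :=
  Matrix.of fun k i => eval x (pderiv k (P i))

lemma malMatrix_eq_transpose_mul_polyJacobian (x : Fin K → ℝ) :
    malMatrix P x = (polyJacobian P x)ᵀ * polyJacobian P x :=
  rfl

lemma posSemidef_malMatrix (x : Fin K → ℝ) : (malMatrix P x).PosSemidef := by
  rw [malMatrix_eq_transpose_mul_polyJacobian, ← Matrix.conjTranspose_eq_transpose_of_trivial]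
  exact Matrix.posSemidef_conjTranspose_mul_self _

lemma quadForm_malMatrix (x : Fin K → ℝ) (a : EuclideanSpace ℝ (Fin d)) :
    quadForm (malMatrix P x) a = ∑ k, (∑ i, a i * eval x (pderiv k (P i))) ^ 2 := by
  rw [malMatrix_eq_transpose_mul_polyJacobian, quadForm_transpose_mul_self]
  simp only [Matrix.mulVec, dotProduct, polyJacobian, Matrix.of_apply, mul_comm]

lemma measurable_malMatrix_apply (i j : Fin d) : Measurable fun x => malMatrix P x i j := by
  have hpoly : ∀ p : MvPolynomial (Fin K) ℝ, Measurable fun x => eval x p :=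
    fun p => (MvPolynomial.continuous_eval p).measurable
  simp only [malMatrix, Matrix.of_apply]
  fun_prop

end Malliavin

/-- Discretization upgrade: for an `L²`-bounded sequence of vectors of
polynomial functionals of degree at most `m`, if the negative moments of the carré du champ of
every sequence of unit-sphere projections are asymptotically bounded, then so are the negative
moments of the determinant of the Malliavin matrix. -/
theorem dimension_upgrade (d m : ℕ) (K : ℕ → ℕ)
    (P : (n : ℕ) → Fin d → MvPolynomial (Fin (K n)) ℝ)
    (hdeg : ∀ n i, (P n i).totalDegree ≤ m)
    (hL2 : ∃ B : ℝ, ∀ n,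
      ∫⁻ x, ENNReal.ofReal (∑ i, (eval x (P n i)) ^ 2) ∂gaussPi (Fin (K n))
        ≤ ENNReal.ofReal B)
    (hsphere : ∀ a : (n : ℕ) → Fin d → ℝ, (∀ n, ∑ i, (a n i) ^ 2 = 1) →
      ∀ q : ℕ, 1 ≤ q →
        Filter.limsup
          (fun n => ∫⁻ x,
            (ENNReal.ofReal (∑ k, (∑ i, a n i * eval x (pderiv k (P n i))) ^ 2) ^ q)⁻¹
            ∂gaussPi (Fin (K n)))
          atTop < ⊤) :
    ∀ q : ℕ, 1 ≤ q →
      Filter.limsup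
        (fun n => ∫⁻ x, (ENNReal.ofReal ((malMatrix (P n) x).det) ^ q)⁻¹ ∂gaussPi (Fin (K n)))
        atTop < ⊤ := by
  intro q hq
  obtain rfl | hd := d.eq_zero_or_pos
  · simp
  have : Nonempty (Fin d) := ⟨⟨0, hd⟩⟩
  have hunit (θ : Metric.sphere (0 : EuclideanSpace ℝ (Fin d)) 1) : ∑ i, θ.1 i ^ 2 = 1 := by
    rw [← EuclideanSpace.real_norm_sq_eq, norm_eq_of_mem_sphere, one_pow]
  have hdet := dimension_upgrade_general (fun n => gaussPi (Fin (K n))) (q := q)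
    (fun n => measurable_malMatrix_apply (P n)) (fun n => posSemidef_malMatrix (P n))
    (one_half_lt_one.le.trans (Nat.one_le_cast.2 hq)) fun θ => by
      simpa only [quadForm_malMatrix, Fintype.card_fin, ← Nat.cast_mul, ENNReal.rpow_neg,
        ENNReal.rpow_natCast] using
        hsphere (fun n => (θ n).1.ofLp) (fun n => hunit (θ n)) (d * q) (Nat.mul_pos hd hq)
  simpa only [ENNReal.rpow_neg, ENNReal.rpow_natCast] using hdet
end
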